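/- arXiv:1707.08510 — 3 statements merged into one kernel-verified Lean document; each statement's English description precedes it below -/
import Mathlib

section
/- For d ∈ ℕ and x ∈ 𝒜_d, let Φ_K^d and Φ_𝒩^d denote the cumulative distribution functions of Σ_{i=2}^d K(x_i,Y_i) and of 𝒩(x,Y), respectively, where Y₂,…,Y_d are independent with Y_i ~ N(x_i, l²/d). Then there exists a constant C > 0 such that sup_{t∈ℝ} |Φ_𝒩^d(t) − Φ_K^d(t)| ≤ C·d^{−1/2} for every d ∈ ℕ and every x ∈ 𝒜_d. -/
/-!
The bound is proved by Stein's method, with no smoothing inequality or density estimate.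

Write `σ = l / √d` and `Y i = x i + σ * Z i` with independent standard normal `Z i`. Both `Nf` and
`SK` then have the form `m + √v * ∑ gP (α i) (β i) (γ i) (Z i)` with a common `m` and
`v = σ² ∑ (log ρ)'(x i)²`, where `gP α β γ z = α z + β (z² - 1) + γ z³`; for `Nf` the coefficients
`β`, `γ` vanish. Gaussian integration by parts in each coordinate gives `E[F f(F)] = E[T f'(F)]`
for such a sum `F`, where `T = ∑ tP (α i) (β i) (γ i) (Z i)` is its Stein kernel. Taking for `f`
the bounded solution of `f' - x f = h - E h(Z)`, which satisfies `|f'| ≤ 2` whenever `0 ≤ h ≤ 1`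
(`exists_stein_solution`), one obtains `|E h(F) - E h(Z)| ≤ 2 E|T - 1|` (`stein_bound`).

For `Nf` the kernel `T` is identically `1`. For `SK` each summand of `v T` differs from
`σ² (log ρ)'(x i)²` by at most `σ³` times a multiple of `exp |x i|` times a polynomial in `Z i`
(`tP_sub_sq_le`): the derivatives of `log ρ` are bounded by multiples of `exp (|x| / 6)`, and at
most six factors occur. Condition (1) of the typical set bounds `∑ exp |x i|` by a multiple of `d`,
and condition (2) bounds `v` from below, since `|(log ρ)'| > 1 / c` on `A`. Hence
`E|T - 1| = O(σ³ d) = O(d^{-1/2})`. Since the estimate is uniform in continuous `h` with values in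
`[0, 1]`, it passes to indicators of half-lines (`cdf_close`).
-/

open MeasureTheory ProbabilityTheory Filter Set

noncomputable section

/-- The exponentially-weighted sup-norm `‖g‖_{∞,s} = sup_x e^{-s|x|} |g x|`. -/
def normIS (g : ℝ → ℝ) (s : ℝ) : ℝ := ⨆ x : ℝ, Real.exp (-(s * |x|)) * |g x|

/-- Membership in the space `Sⁿ`: `n`-times continuously differentiable with all
iterated derivatives up to order `n` of sub-exponential growth. -/
def MemS (n : ℕ) (g : ℝ → ℝ) : Prop :=
  ContDiff ℝ n g ∧ ∀ s > (0:ℝ), ∀ i ≤ n,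
    BddAbove (Set.range fun x => Real.exp (-(s * |x|)) * |iteratedDeriv i g x|)

/-- A positive sequence is sluggish if it tends to infinity but `a d / √(log d)` stays bounded. -/
def Sluggish (a : ℕ → ℝ) : Prop :=
  (∀ d, 0 < a d) ∧ Tendsto a atTop atTop ∧
    ∃ M : ℝ, ∀ d : ℕ, 2 ≤ d → a d / Real.sqrt (Real.log d) ≤ M

/-- `(log ρ)'` -/
def dl (ρ : ℝ → ℝ) : ℝ → ℝ := deriv fun x => Real.log (ρ x)

/-- `(log ρ)''` -/
def d2l (ρ : ℝ → ℝ) : ℝ → ℝ := deriv (dl ρ)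

/-- `ρ(g) = ∫ g dρ` -/
def rhoE (ρ g : ℝ → ℝ) : ℝ := ∫ x, g x * ρ x

/-- `J = ρ(((log ρ)')²)` -/
def Jc (ρ : ℝ → ℝ) : ℝ := rhoE ρ fun x => (dl ρ x) ^ 2

/-- super-exponential tails: `(x/|x|)·(log ρ)'(x) → -∞` as `|x| → ∞`. -/
def SuperExpTails (ρ : ℝ → ℝ) : Prop :=
  Tendsto (dl ρ) atTop atBot ∧ Tendsto (dl ρ) atBot atTop

/-- standard normal CDF -/
def stdCDF (t : ℝ) : ℝ := ((gaussianReal 0 1) (Set.Iic t)).toReal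

/-- the constant `h(l) = 2l²Φ(-l√J/2)` -/
def hc (ρ : ℝ → ℝ) (l : ℝ) : ℝ := 2 * l ^ 2 * stdCDF (-(l * Real.sqrt (Jc ρ)) / 2)

/-- the limiting (Langevin) generator `G f = (h(l)/2)(f'' + (log ρ)' f')` -/
def Gop (ρ : ℝ → ℝ) (l : ℝ) (f : ℝ → ℝ) (x : ℝ) : ℝ :=
  hc ρ l / 2 * (deriv (deriv f) x + dl ρ x * deriv f x)

/-- the product measure `ρ_d` on `ℝ^d` -/
def pm (ρ : ℝ → ℝ) (d : ℕ) : Measure (Fin d → ℝ) :=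
  Measure.pi fun _ => volume.withDensity fun x => ENNReal.ofReal (ρ x)

/-- law of the proposal `Y ~ N(x, l²/d · I_d)` -/
def gaussPi (l : ℝ) (d : ℕ) (x : Fin d → ℝ) : Measure (Fin d → ℝ) :=
  Measure.pi fun i => gaussianReal (x i) ((l ^ 2 / (d:ℝ)).toNNReal)

/-- the RWM generator `G_d` -/
def Gd (ρ : ℝ → ℝ) (l : ℝ) (d : ℕ) [NeZero d] (f : ℝ → ℝ) (x : Fin d → ℝ) : ℝ :=
  (d:ℝ) * ∫ y, (f (y 0) - f (x 0)) * min 1 ((∏ i, ρ (y i)) / ∏ i, ρ (x i)) ∂(gaussPi l d x)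

/-- the set `A` associated with the constant `c_A` -/
def Aset (ρ : ℝ → ℝ) (c : ℝ) : Set ℝ :=
  {x | |d2l ρ x| < (dl ρ x) ^ 2 ∧ 1 / c < |dl ρ x| ∧ |dl ρ x| < c}

/-- indices `2,…,d` (all coordinates except the first) -/
def restIdx (d : ℕ) : Finset (Fin d) := Finset.univ.filter fun i => (i : ℕ) ≠ 0

/-- the typical sets `𝒜_d` -/
def Ad (ρ : ℝ → ℝ) (c : ℝ) (a : ℕ → ℝ) (d : ℕ) : Set (Fin d → ℝ) :=
  {x | (1 / ((d : ℝ) - 1)) * ∑ i ∈ restIdx d, Real.exp |x i| < 2 * rhoE ρ (fun t => Real.exp |t|)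
    ∧ (∫ t in Aset ρ c, ρ t) / 2 <
        (1 / ((d : ℝ) - 1)) * ∑ i ∈ restIdx d, (Aset ρ c).indicator (fun _ => (1:ℝ)) (x i)
    ∧ (1 / ((d : ℝ) - 1)) * |∑ i ∈ restIdx d, ((dl ρ (x i)) ^ 2 - Jc ρ)| <
        a d / Real.sqrt d * Real.sqrt (3 * rhoE ρ fun t => ((dl ρ t) ^ 2 - Jc ρ) ^ 2)
    ∧ (1 / ((d : ℝ) - 1)) * |∑ i ∈ restIdx d, (d2l ρ (x i) + Jc ρ)| <
        a d / Real.sqrt d * Real.sqrt (3 * rhoE ρ fun t => (d2l ρ t + Jc ρ) ^ 2)}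

/-- `K(x,y)` -/
def Kf (ρ : ℝ → ℝ) (c : ℝ) (x y : ℝ) : ℝ :=
  dl ρ x * (y - x) + d2l ρ x / 2 * (y - x) ^ 2
    + (dl ρ x) ^ 3 * (Aset ρ c).indicator (fun _ => (1:ℝ)) x / 3 * (y - x) ^ 3

/-- `Σ_{i=2}^d K(x_i, Y_i)` -/
def SK (ρ : ℝ → ℝ) (c : ℝ) (d : ℕ) (x Y : Fin d → ℝ) : ℝ :=
  ∑ i ∈ restIdx d, Kf ρ c (x i) (Y i)

/-- `β(x,y)` -/
def betaF (ρ : ℝ → ℝ) (c l : ℝ) (d : ℕ) [NeZero d] (x : Fin d → ℝ) (y : ℝ) : ℝ :=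
  ∫ Y, min 1 (Real.exp (dl ρ (x 0) * (y - x 0) + SK ρ c d x Y)) ∂(gaussPi l d x)

/-- `G̃_d` -/
def tGd (ρ : ℝ → ℝ) (c l : ℝ) (d : ℕ) [NeZero d] (f : ℝ → ℝ) (x : Fin d → ℝ) : ℝ :=
  (d:ℝ) * ∫ y, (f y - f (x 0)) * betaF ρ c l d x y
    ∂(gaussianReal (x 0) ((l ^ 2 / (d:ℝ)).toNNReal))

/-- `Ĝ_d` -/
def hGd (ρ : ℝ → ℝ) (c l : ℝ) (d : ℕ) [NeZero d] (f : ℝ → ℝ) (x : Fin d → ℝ) : ℝ :=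
  l ^ 2 / 2 * deriv (deriv f) (x 0) * (∫ Y, min 1 (Real.exp (SK ρ c d x Y)) ∂(gaussPi l d x))
    + l ^ 2 * deriv f (x 0) * dl ρ (x 0) *
      (∫ Y, (Set.Iio (0:ℝ)).indicator Real.exp (SK ρ c d x Y) ∂(gaussPi l d x))

/-- `𝒩(x,Y)` -/
def Nf (ρ : ℝ → ℝ) (l : ℝ) (d : ℕ) (x Y : Fin d → ℝ) : ℝ :=
  l ^ 2 / (2 * (d:ℝ)) * ∑ i ∈ restIdx d, d2l ρ (x i)
    + ∑ i ∈ restIdx d, dl ρ (x i) * (Y i - x i)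

/-- `Ğ_d` -/
def bGd (ρ : ℝ → ℝ) (l : ℝ) (d : ℕ) [NeZero d] (f : ℝ → ℝ) (x : Fin d → ℝ) : ℝ :=
  l ^ 2 / 2 * deriv (deriv f) (x 0) * (∫ Y, min 1 (Real.exp (Nf ρ l d x Y)) ∂(gaussPi l d x))
    + l ^ 2 * deriv f (x 0) * dl ρ (x 0) *
      (∫ Y, (Set.Iio (0:ℝ)).indicator Real.exp (Nf ρ l d x Y) ∂(gaussPi l d x))

/-! ### Standard normal density and Stein's equation -/

lemma integrable_gauss_iff (ψ : ℝ → ℝ) :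
    Integrable ψ (gaussianReal 0 1) ↔ Integrable (fun x => gaussianPDFReal 0 1 x * ψ x) := by
  rw [gaussianReal_of_var_ne_zero 0 one_ne_zero,
    integrable_withDensity_iff_integrable_smul' (measurable_gaussianPDF 0 1)
      (by filter_upwards with x using gaussianPDF_lt_top)]
  simp [toReal_gaussianPDF]

lemma integral_gauss_eq (ψ : ℝ → ℝ) :
    ∫ x, ψ x ∂(gaussianReal 0 1) = ∫ x, gaussianPDFReal 0 1 x * ψ x := by
  simpa using integral_gaussianReal_eq_integral_smul (μ := 0) (v := 1) one_ne_zero (f := ψ)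

lemma integrable_gauss_poly (P : Polynomial ℝ) :
    Integrable (fun x => P.eval x) (gaussianReal 0 1) := by
  induction P using Polynomial.induction_on' with
  | add p q hp hq =>
    simp only [Polynomial.eval_add]
    exact hp.add hq
  | monomial n a =>
    simp only [Polynomial.eval_monomial]
    refine Integrable.const_mul ?_ a
    have := (memLp_id_gaussianReal (μ := 0) (v := 1) n).integrable_norm_pow'
    refine this.mono' (by fun_prop) ?_
    filter_upwards with x
    simp

lemma hasDerivAt_gaussPDF (x : ℝ) :
    HasDerivAt (gaussianPDFReal 0 1) (-x * gaussianPDFReal 0 1 x) x := by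
  have h1 : HasDerivAt (fun y : ℝ => -(y - 0) ^ 2 / (2 * ((1 : NNReal) : ℝ))) (-x) x := by
    have := ((((hasDerivAt_id x).sub_const 0).pow 2).neg).div_const (2 * ((1 : NNReal) : ℝ))
    refine this.congr_deriv ?_
    simp
    ring
  have h2 := h1.exp.const_mul ((√(2 * Real.pi * ((1 : NNReal) : ℝ)))⁻¹)
  rw [gaussianPDFReal_def]
  refine h2.congr_deriv ?_
  ring

lemma continuous_gaussPDF : Continuous (gaussianPDFReal 0 1) :=
  continuous_iff_continuousAt.2 fun x => (hasDerivAt_gaussPDF x).continuousAt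

lemma gaussPDF_pos (x : ℝ) : 0 < gaussianPDFReal 0 1 x := gaussianPDFReal_pos 0 1 x one_ne_zero

lemma integrable_mul_gaussPDF : Integrable (fun x : ℝ => -x * gaussianPDFReal 0 1 x) := by
  have := (integrable_gauss_iff _).1 (integrable_gauss_poly (-Polynomial.X))
  refine this.congr ?_
  filter_upwards with x
  simp [mul_comm]

/-- Mills' inequality for the upper Gaussian tail. -/
lemma mills_Ioi (x : ℝ) :
    x * ∫ s in Ioi x, gaussianPDFReal 0 1 s ≤ gaussianPDFReal 0 1 x := by
  have hi := integrable_mul_gaussPDF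
  have ht := tendsto_zero_of_hasDerivAt_of_integrableOn_Ioi (a := x)
    (fun y _ => hasDerivAt_gaussPDF y) hi.integrableOn
    (integrable_gaussianPDFReal 0 1).integrableOn
  have hF := integral_Ioi_of_hasDerivAt_of_tendsto' (a := x)
    (fun y _ => hasDerivAt_gaussPDF y) hi.integrableOn ht
  have : ∫ s in Ioi x, x * gaussianPDFReal 0 1 s ≤
      ∫ s in Ioi x, -(-s * gaussianPDFReal 0 1 s) := by
    refine setIntegral_mono_on ((integrable_gaussianPDFReal 0 1).const_mul x).integrableOn
      hi.neg.integrableOn measurableSet_Ioi fun s hs => ?_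
    have := gaussPDF_pos s
    nlinarith [mem_Ioi.1 hs]
  rw [integral_const_mul, integral_neg, hF] at this
  linarith

/-- Mills' inequality for the lower Gaussian tail. -/
lemma mills_Iic (x : ℝ) :
    -x * ∫ s in Iic x, gaussianPDFReal 0 1 s ≤ gaussianPDFReal 0 1 x := by
  have hi := integrable_mul_gaussPDF
  have ht := tendsto_zero_of_hasDerivAt_of_integrableOn_Iic (a := x)
    (fun y _ => hasDerivAt_gaussPDF y) hi.integrableOn
    (integrable_gaussianPDFReal 0 1).integrableOn
  have hF := integral_Iic_of_hasDerivAt_of_tendsto' (a := x)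
    (fun y _ => hasDerivAt_gaussPDF y) hi.integrableOn ht
  have : ∫ s in Iic x, -x * gaussianPDFReal 0 1 s ≤
      ∫ s in Iic x, (-s * gaussianPDFReal 0 1 s) := by
    refine setIntegral_mono_on ((integrable_gaussianPDFReal 0 1).const_mul (-x)).integrableOn
      hi.integrableOn measurableSet_Iic fun s hs => ?_
    have := gaussPDF_pos s
    nlinarith [mem_Iic.1 hs]
  rw [integral_const_mul, hF] at this
  linarith

/-- Stein's equation for a continuous `h` with values in `[0, 1]`. The solution is
`f x = (∫ s in Iic x, φ s * (h s - m)) / φ x`, with `φ` the standard normal density and `m` the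
mean of `h`; Mills' inequalities give `|x * f x| ≤ 1`, hence the bound on `f'`. -/
lemma exists_stein_solution (h : ℝ → ℝ) (hc : Continuous h) (h0 : ∀ x, 0 ≤ h x)
    (h1 : ∀ x, h x ≤ 1) :
    ∃ (f f' : ℝ → ℝ) (B : ℝ), (∀ x, HasDerivAt f (f' x) x) ∧ Continuous f' ∧
      (∀ x, |f x| ≤ B) ∧ (∀ x, |f' x| ≤ 2) ∧
      ∀ x, f' x - x * f x = h x - ∫ s, h s ∂(gaussianReal 0 1) := by
  set φ := gaussianPDFReal 0 1 with hφ
  set m := ∫ s, h s ∂(gaussianReal 0 1) with hm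
  have hφi : Integrable φ := integrable_gaussianPDFReal 0 1
  have hhi : Integrable h (gaussianReal 0 1) :=
    Integrable.of_bound hc.aestronglyMeasurable 1 (by
      filter_upwards with x
      rw [Real.norm_eq_abs, abs_of_nonneg (h0 x)]
      exact h1 x)
  have hm0 : 0 ≤ m := integral_nonneg h0
  have hm1 : m ≤ 1 := by
    have := integral_mono hhi (integrable_const 1) h1
    simpa using this
  have hd : ∀ x, |h x - m| ≤ 1 := fun x => abs_le.2 ⟨by linarith [h0 x], by linarith [h1 x]⟩
  set k : ℝ → ℝ := fun x => φ x * (h x - m) with hk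
  have hkc : Continuous k := continuous_gaussPDF.mul (hc.sub continuous_const)
  have hki : Integrable k := (integrable_gauss_iff _).1 (hhi.sub (integrable_const m))
  have hk0 : ∫ x, k x = 0 := by
    rw [← integral_gauss_eq, integral_sub hhi (integrable_const m)]
    simp [hm]
  have hkφ : ∀ x, ‖k x‖ ≤ φ x := fun x => by
    have := gaussPDF_pos x
    rw [Real.norm_eq_abs, abs_mul, abs_of_pos this]
    nlinarith [hd x]
  set G : ℝ → ℝ := fun x => ∫ s in Iic x, k s with hG
  have hGd : ∀ x, HasDerivAt G (k x) x := by
    intro x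
    have e : G = fun y => (∫ s in Iic 0, k s) + ∫ s in (0:ℝ)..y, k s := by
      funext y
      rw [intervalIntegral.integral_Iic_sub_Iic hki.integrableOn hki.integrableOn |>.symm]
      simp [hG]
    rw [e]
    exact (intervalIntegral.integral_hasDerivAt_right (hkc.intervalIntegrable _ _)
      (hkc.stronglyMeasurableAtFilter _ _) hkc.continuousAt).const_add _
  have hGl : ∀ x, |G x| ≤ ∫ s in Iic x, φ s := fun x =>
    norm_integral_le_of_norm_le hφi.integrableOn (by filter_upwards with s using hkφ s)
  have hGr : ∀ x, |G x| ≤ ∫ s in Ioi x, φ s := fun x => by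
    have : G x = -∫ s in Ioi x, k s := by
      have := intervalIntegral.integral_Iic_add_Ioi (b := x) hki.integrableOn hki.integrableOn
      rw [hk0] at this
      simp only [hG]
      linarith
    rw [this, abs_neg]
    exact norm_integral_le_of_norm_le hφi.integrableOn (by filter_upwards with s using hkφ s)
  set f : ℝ → ℝ := fun x => G x / φ x with hf
  have hxf : ∀ x, |x * f x| ≤ 1 := by
    intro x
    have hp := gaussPDF_pos x
    rw [hf]
    simp only
    rw [mul_div_assoc', abs_div, abs_of_pos hp, div_le_one hp, abs_mul]
    rcases le_total 0 x with hx | hx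
    · rw [abs_of_nonneg hx]
      exact (mul_le_mul_of_nonneg_left (hGr x) hx).trans (mills_Ioi x)
    · rw [abs_of_nonpos hx]
      exact (mul_le_mul_of_nonneg_left (hGl x) (by linarith)).trans (mills_Iic x)
  have hfd : ∀ x, HasDerivAt f (h x - m + x * f x) x := by
    intro x
    have hp := gaussPDF_pos x
    refine ((hGd x).div (hasDerivAt_gaussPDF x) hp.ne').congr_deriv ?_
    simp only [hf, hk, hφ]
    field_simp
    ring
  have hfc : Continuous f := continuous_iff_continuousAt.2 fun x => (hfd x).continuousAt
  obtain ⟨B, hB⟩ := (isCompact_Icc (a := (-1:ℝ)) (b := 1)).exists_bound_of_continuousOn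
    hfc.continuousOn
  refine ⟨f, fun x => h x - m + x * f x, max B 1, hfd, by fun_prop, ?_, ?_, fun x => by ring⟩
  · intro x
    by_cases hx : |x| ≤ 1
    · exact (hB x (abs_le.1 hx)).trans (le_max_left _ _)
    · refine le_trans ?_ (le_max_right _ _)
      have := hxf x
      rw [abs_mul] at this
      push Not at hx
      nlinarith [abs_nonneg (f x)]
  · intro x
    exact (abs_add_le _ _).trans (by linarith [hd x, hxf x])

/-! ### Stein kernels of cubic polynomials -/

/-- The cubic `α z + β (z² - 1) + γ z³`, of mean zero under the standard normal law. -/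
def gP (α β γ z : ℝ) : ℝ := α * z + β * (z ^ 2 - 1) + γ * z ^ 3

/-- The Stein kernel of `gP α β γ`: the product of its derivative with the polynomial `h` that
solves `z h - h' = gP α β γ z`. -/
def tP (α β γ z : ℝ) : ℝ :=
  (α + 2 * β * z + 3 * γ * z ^ 2) * (α + β * z + γ * (z ^ 2 + 2))

lemma continuous_gP (α β γ : ℝ) : Continuous (gP α β γ) := by unfold gP; fun_prop

lemma continuous_tP (α β γ : ℝ) : Continuous (tP α β γ) := by unfold tP; fun_prop

lemma integrable_gP (α β γ : ℝ) : Integrable (gP α β γ) (gaussianReal 0 1) := by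
  open Polynomial in
  have := integrable_gauss_poly (C α * X + C β * (X ^ 2 - 1) + C γ * X ^ 3)
  refine this.congr ?_
  filter_upwards with x
  simp [gP]

lemma integrable_tP (α β γ : ℝ) : Integrable (tP α β γ) (gaussianReal 0 1) := by
  open Polynomial in
  have := integrable_gauss_poly
    ((C α + C (2 * β) * X + C (3 * γ) * X ^ 2) * (C α + C β * X + C γ * (X ^ 2 + C 2)))
  refine this.congr ?_
  filter_upwards with x
  simp [tP]

lemma integrable_mul_of_bdd {Ω : Type*} [MeasurableSpace Ω] {μ : Measure Ω} {g b : Ω → ℝ}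
    (hg : Integrable g μ) (hb : AEStronglyMeasurable b μ) {B : ℝ} (hB : ∀ x, |b x| ≤ B) :
    Integrable (fun x => g x * b x) μ :=
  hg.mul_bdd hb (by filter_upwards with x using hB x)

/-- Gaussian integration by parts in one variable. -/
lemma stein_one (f f' : ℝ → ℝ) (B : ℝ) (hf : ∀ x, HasDerivAt f (f' x) x) (hf' : Continuous f')
    (hB : ∀ x, |f x| ≤ B) (hB' : ∀ x, |f' x| ≤ 2) (α β γ k : ℝ) :
    ∫ z, gP α β γ z * f (gP α β γ z + k) ∂(gaussianReal 0 1) =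
      ∫ z, tP α β γ z * f' (gP α β γ z + k) ∂(gaussianReal 0 1) := by
  have hfc : Continuous f := continuous_iff_continuousAt.2 fun x => (hf x).continuousAt
  have hgc := continuous_gP α β γ
  have i1 : Integrable (fun z => gP α β γ z * f (gP α β γ z + k)) (gaussianReal 0 1) :=
    integrable_mul_of_bdd (integrable_gP α β γ)
      (Continuous.aestronglyMeasurable (by fun_prop)) fun x => hB _
  have i2 : Integrable (fun z => tP α β γ z * f' (gP α β γ z + k)) (gaussianReal 0 1) :=
    integrable_mul_of_bdd (integrable_tP α β γ)
      (Continuous.aestronglyMeasurable (by fun_prop)) fun x => hB' _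
  set h : ℝ → ℝ := fun z => α + β * z + γ * (z ^ 2 + 2) with hh
  have ih : Integrable h (gaussianReal 0 1) := by
    open Polynomial in
    have := integrable_gauss_poly (C α + C β * X + C γ * (X ^ 2 + C 2))
    refine this.congr ?_
    filter_upwards with x
    simp [hh]
  have i3 : Integrable (fun z => h z * f (gP α β γ z + k)) (gaussianReal 0 1) :=
    integrable_mul_of_bdd ih (Continuous.aestronglyMeasurable (by fun_prop)) fun x => hB _
  have hgd : ∀ z, HasDerivAt (fun z => gP α β γ z + k) (α + 2 * β * z + 3 * γ * z ^ 2) z := by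
    intro z
    have := ((((hasDerivAt_id z).const_mul α).add
      ((((hasDerivAt_id z).pow 2).sub_const 1).const_mul β)).add
      (((hasDerivAt_id z).pow 3).const_mul γ)).add_const k
    refine this.congr_deriv ?_
    simp
    ring
  have hhd : ∀ z, HasDerivAt h (β + 2 * γ * z) z := by
    intro z
    have := (((hasDerivAt_id z).const_mul β).const_add α).add
      ((((hasDerivAt_id z).pow 2).add_const 2).const_mul γ)
    refine this.congr_deriv ?_
    simp
    ring
  have key := integral_eq_zero_of_hasDerivAt_of_integrable
    (f := fun z => gaussianPDFReal 0 1 z * (h z * f (gP α β γ z + k)))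
    (f' := fun z => gaussianPDFReal 0 1 z *
      (tP α β γ z * f' (gP α β γ z + k) - gP α β γ z * f (gP α β γ z + k)))
    (fun z => by
      refine ((hasDerivAt_gaussPDF z).mul ((hhd z).mul
        ((hf (gP α β γ z + k)).comp z (hgd z)))).congr_deriv ?_
      simp only [hh, tP, gP, Function.comp, Pi.mul_apply]
      ring)
    ((integrable_gauss_iff _).1 (i2.sub i1)) ((integrable_gauss_iff _).1 i3)
  rw [← integral_gauss_eq (fun z =>
    tP α β γ z * f' (gP α β γ z + k) - gP α β γ z * f (gP α β γ z + k)),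
    integral_sub i2 i1] at key
  linarith

/-- The law of `d` independent standard normal variables. -/
def stdPi (d : ℕ) : Measure (Fin d → ℝ) := Measure.pi fun _ => gaussianReal 0 1

instance (d : ℕ) : IsProbabilityMeasure (stdPi d) := by unfold stdPi; infer_instance

lemma integrable_coord {d : ℕ} (i : Fin d) {g : ℝ → ℝ} (hg : Integrable g (gaussianReal 0 1)) :
    Integrable (fun z : Fin d → ℝ => g (z i)) (stdPi d) :=
  integrable_comp_eval (μ := fun _ : Fin d => gaussianReal 0 1) hg

lemma integral_coord {d : ℕ} (i : Fin d) {g : ℝ → ℝ} (hg : Continuous g) :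
    ∫ z : Fin d → ℝ, g (z i) ∂(stdPi d) = ∫ y, g y ∂(gaussianReal 0 1) :=
  integral_comp_eval (μ := fun _ : Fin d => gaussianReal 0 1) hg.aestronglyMeasurable

/-- The sum `∑ᵢ gP αᵢ βᵢ γᵢ (zᵢ)` of cubics of the independent coordinates. -/
def sumP {d : ℕ} (α β γ : Fin d → ℝ) (z : Fin d → ℝ) : ℝ := ∑ i, gP (α i) (β i) (γ i) (z i)

lemma continuous_sumP {d : ℕ} (α β γ : Fin d → ℝ) : Continuous (sumP α β γ) := by
  unfold sumP
  exact continuous_finsetSum _ fun i _ => (continuous_gP _ _ _).comp (continuous_apply i)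

/-- Integration by parts in the `i`-th coordinate, the other coordinates being frozen by
Fubini's theorem. -/
lemma stein_coord {d : ℕ} (f f' : ℝ → ℝ) (B : ℝ) (hf : ∀ x, HasDerivAt f (f' x) x)
    (hf' : Continuous f') (hB : ∀ x, |f x| ≤ B) (hB' : ∀ x, |f' x| ≤ 2) (α β γ : Fin d → ℝ)
    (i : Fin d) :
    ∫ z, gP (α i) (β i) (γ i) (z i) * f (sumP α β γ z) ∂(stdPi d) =
      ∫ z, tP (α i) (β i) (γ i) (z i) * f' (sumP α β γ z) ∂(stdPi d) := by
  have hfc : Continuous f := continuous_iff_continuousAt.2 fun x => (hf x).continuousAt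
  have hsc := continuous_sumP α β γ
  have i1 : Integrable (fun z => gP (α i) (β i) (γ i) (z i) * f (sumP α β γ z)) (stdPi d) :=
    integrable_mul_of_bdd (integrable_coord i (integrable_gP _ _ _))
      (Continuous.aestronglyMeasurable (by fun_prop)) fun x => hB _
  have i2 : Integrable (fun z => tP (α i) (β i) (γ i) (z i) * f' (sumP α β γ z)) (stdPi d) :=
    integrable_mul_of_bdd (integrable_coord i (integrable_tP _ _ _))
      (Continuous.aestronglyMeasurable (by fun_prop)) fun x => hB' _
  obtain _ | n := d
  · exact i.elim0
  have mp := (measurePreserving_piFinSuccAbove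
    (fun _ : Fin (n + 1) => gaussianReal 0 1) i).symm
  unfold stdPi at i1 i2 ⊢
  rw [← mp.integrable_comp_emb (MeasurableEquiv.measurableEmbedding _)] at i1 i2
  simp only [Function.comp_def] at i1 i2
  rw [← mp.integral_comp', ← mp.integral_comp', integral_prod_symm _ i1, integral_prod_symm _ i2]
  refine integral_congr_ae ?_
  filter_upwards with w
  have hs : ∀ y, sumP α β γ (Fin.insertNthEquiv (fun _ => ℝ) i (y, w)) =
      gP (α i) (β i) (γ i) y +
        ∑ j, gP (α (i.succAbove j)) (β (i.succAbove j)) (γ (i.succAbove j)) (w j) := by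
    intro y
    unfold sumP
    rw [Fin.sum_univ_succAbove _ i]
    simp
  simp only [MeasurableEquiv.piFinSuccAbove_symm_apply, hs]
  simp only [Fin.insertNthEquiv_apply, Fin.insertNth_apply_same]
  exact stein_one f f' B hf hf' hB hB' _ _ _ _

/-- Stein's bound: the distance between the law of `sumP α β γ` and the standard normal law is
controlled by the mean deviation of the total Stein kernel from `1`. -/
lemma stein_bound {d : ℕ} (α β γ : Fin d → ℝ) (h : ℝ → ℝ) (hc : Continuous h)
    (h0 : ∀ x, 0 ≤ h x) (h1 : ∀ x, h x ≤ 1) :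
    |∫ z, h (sumP α β γ z) ∂(stdPi d) - ∫ s, h s ∂(gaussianReal 0 1)| ≤
      2 * ∫ z, |∑ i, tP (α i) (β i) (γ i) (z i) - 1| ∂(stdPi d) := by
  obtain ⟨f, f', B, hf, hf', hB, hB', hE⟩ := exists_stein_solution h hc h0 h1
  have hfc : Continuous f := continuous_iff_continuousAt.2 fun x => (hf x).continuousAt
  have hsc := continuous_sumP α β γ
  have i1 : ∀ i, Integrable
      (fun z => gP (α i) (β i) (γ i) (z i) * f (sumP α β γ z)) (stdPi d) := fun i =>
    integrable_mul_of_bdd (integrable_coord i (integrable_gP _ _ _))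
      (Continuous.aestronglyMeasurable (by fun_prop)) fun x => hB _
  have i2 : ∀ i, Integrable
      (fun z => tP (α i) (β i) (γ i) (z i) * f' (sumP α β γ z)) (stdPi d) := fun i =>
    integrable_mul_of_bdd (integrable_coord i (integrable_tP _ _ _))
      (Continuous.aestronglyMeasurable (by fun_prop)) fun x => hB' _
  have iT : Integrable (fun z : Fin d → ℝ => ∑ i, tP (α i) (β i) (γ i) (z i) - 1) (stdPi d) :=
    (integrable_finsetSum _ fun i _ => integrable_coord i (integrable_tP _ _ _)).sub
      (integrable_const 1)
  have i3 : Integrable (fun z => f' (sumP α β γ z)) (stdPi d) :=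
    Integrable.of_bound (Continuous.aestronglyMeasurable (by fun_prop)) 2
      (by filter_upwards with z using hB' _)
  have i4 : Integrable (fun z => h (sumP α β γ z)) (stdPi d) :=
    Integrable.of_bound (Continuous.aestronglyMeasurable (by fun_prop)) 1
      (by filter_upwards with z
          rw [Real.norm_eq_abs, abs_of_nonneg (h0 _)]
          exact h1 _)
  have e1 : ∫ z, sumP α β γ z * f (sumP α β γ z) ∂(stdPi d) =
      ∫ z, (∑ i, tP (α i) (β i) (γ i) (z i)) * f' (sumP α β γ z) ∂(stdPi d) := by
    have : ∀ z, sumP α β γ z * f (sumP α β γ z) =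
        ∑ i, gP (α i) (β i) (γ i) (z i) * f (sumP α β γ z) := fun z => by
      rw [← Finset.sum_mul]; rfl
    simp_rw [this, Finset.sum_mul]
    rw [integral_finsetSum _ fun i _ => i1 i, integral_finsetSum _ fun i _ => i2 i]
    exact Finset.sum_congr rfl fun i _ => stein_coord f f' B hf hf' hB hB' α β γ i
  have i5 : Integrable (fun z => sumP α β γ z * f (sumP α β γ z)) (stdPi d) := by
    have := integrable_finsetSum Finset.univ fun i (_ : i ∈ Finset.univ) => i1 i
    refine this.congr ?_
    filter_upwards with z
    rw [← Finset.sum_mul]; rfl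
  have i6 := integrable_mul_of_bdd iT (b := fun z => f' (sumP α β γ z))
    (Continuous.aestronglyMeasurable (by fun_prop)) fun x => hB' _
  have i7 : Integrable (fun z => (∑ i, tP (α i) (β i) (γ i) (z i)) * f' (sumP α β γ z))
      (stdPi d) := by
    have := i6.add i3
    refine this.congr ?_
    filter_upwards with z
    simp only [Pi.add_apply]
    ring
  have e2 : ∫ z, h (sumP α β γ z) ∂(stdPi d) - ∫ s, h s ∂(gaussianReal 0 1) =
      -∫ z, (∑ i, tP (α i) (β i) (γ i) (z i) - 1) * f' (sumP α β γ z) ∂(stdPi d) := by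
    have a1 : ∫ z, (f' (sumP α β γ z) - sumP α β γ z * f (sumP α β γ z)) ∂(stdPi d) =
        ∫ z, h (sumP α β γ z) ∂(stdPi d) - ∫ s, h s ∂(gaussianReal 0 1) := by
      simp_rw [hE]
      rw [integral_sub i4 (integrable_const _)]
      simp
    rw [← a1, integral_sub i3 i5, e1]
    simp_rw [sub_mul, one_mul]
    rw [integral_sub i7 i3]
    ring
  rw [e2, abs_neg, ← integral_const_mul]
  refine (abs_integral_le_integral_abs).trans (integral_mono i6.abs (iT.abs.const_mul 2) ?_)
  intro z
  simp only [abs_mul]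
  nlinarith [hB' (sumP α β γ z), abs_nonneg (∑ i, tP (α i) (β i) (γ i) (z i) - 1)]

/-! ### From continuous test functions to distribution functions -/

/-- If two random variables are `δ`-close when tested on continuous functions with values in
`[0, 1]`, then their distribution functions are `δ`-close. -/
lemma cdf_close {Ω : Type*} [MeasurableSpace Ω] (μ : Measure Ω) [IsProbabilityMeasure μ]
    (X Y : Ω → ℝ) (hX : Measurable X) (hY : Measurable Y) (δ : ℝ)
    (H : ∀ h : ℝ → ℝ, Continuous h → (∀ x, 0 ≤ h x) → (∀ x, h x ≤ 1) →
      |∫ ω, h (X ω) ∂μ - ∫ ω, h (Y ω) ∂μ| ≤ δ) (t : ℝ) :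
    |(μ {ω | X ω ≤ t}).toReal - (μ {ω | Y ω ≤ t}).toReal| ≤ δ := by
  -- The indicator of `(-∞, t]` is the pointwise limit of piecewise linear functions.
  set h : ℕ → ℝ → ℝ := fun n x => max 0 (min 1 (1 - n * (x - t))) with hh
  have hcont : ∀ n, Continuous (h n) := fun n => by simp only [hh]; fun_prop
  have hnn : ∀ n x, 0 ≤ h n x := fun n x => le_max_left _ _
  have hle : ∀ n x, h n x ≤ 1 := fun n x => max_le zero_le_one (min_le_left _ _)
  have hlim : ∀ x, Tendsto (fun n => h n x) atTop
      (nhds ((Iic t).indicator (fun _ => (1:ℝ)) x)) := by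
    intro x
    by_cases hx : x ≤ t
    · rw [indicator_of_mem (mem_Iic.2 hx)]
      refine tendsto_const_nhds.congr fun n => ?_
      have : (n : ℝ) * (x - t) ≤ 0 :=
        mul_nonpos_of_nonneg_of_nonpos n.cast_nonneg (by linarith)
      simp only [hh]
      rw [min_eq_left (by linarith), max_eq_right zero_le_one]
    · rw [indicator_of_notMem (by simpa using hx)]
      push Not at hx
      obtain ⟨N, hN⟩ := exists_nat_gt (1 / (x - t))
      refine tendsto_const_nhds.congr' ?_
      filter_upwards [eventually_ge_atTop N] with n hn
      have hp : 0 < x - t := by linarith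
      have hn' : (N : ℝ) ≤ n := by exact_mod_cast hn
      rw [div_lt_iff₀ hp] at hN
      have : 1 ≤ (n : ℝ) * (x - t) := by nlinarith
      simp only [hh]
      rw [max_eq_left]
      exact (min_le_right _ _).trans (by linarith)
  have conv : ∀ Z : Ω → ℝ, Measurable Z →
      Tendsto (fun n => ∫ ω, h n (Z ω) ∂μ) atTop (nhds (μ {ω | Z ω ≤ t}).toReal) := by
    intro Z hZ
    have e : (μ {ω | Z ω ≤ t}).toReal = ∫ ω, (Iic t).indicator (fun _ => (1:ℝ)) (Z ω) ∂μ := by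
      have : (fun ω => (Iic t).indicator (fun _ => (1:ℝ)) (Z ω)) =
          {ω | Z ω ≤ t}.indicator (fun _ => (1:ℝ)) := by
        funext ω
        simp [indicator]
      rw [this, integral_indicator_const _ (measurableSet_le hZ measurable_const)]
      simp [Measure.real]
    rw [e]
    refine tendsto_integral_of_dominated_convergence (fun _ => (1:ℝ))
      (fun n => ((hcont n).measurable.comp hZ).aestronglyMeasurable) (integrable_const 1)
      (fun n => ?_) ?_
    · filter_upwards with ω
      rw [Real.norm_eq_abs, abs_of_nonneg (hnn _ _)]
      exact hle _ _
    · filter_upwards with ω using hlim _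
  exact le_of_tendsto ((conv X hX).sub (conv Y hY)).abs
    (Eventually.of_forall fun n => H (h n) (hcont n) (hnn n) (hle n))

/-! ### Perturbation estimate -/

/-- With `α = σ p`, `β = σ² q / 2`, `γ = σ³ r / 3`, the Stein kernel differs from the variance
`σ² p²` of the linear part by `O(σ³)`. -/
lemma tP_sub_sq_le {σ L E p q r : ℝ} (hσ : 0 ≤ σ) (hσL : σ ≤ L) (hE : 1 ≤ E) (hp : |p| ≤ E)
    (hq : |q| ≤ E) (hr : |r| ≤ E ^ 3) (z : ℝ) :
    |tP (σ * p) (σ ^ 2 * q / 2) (σ ^ 3 * r / 3) z - σ ^ 2 * p ^ 2| ≤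
      σ ^ 3 * E ^ 6 * (2 * (2 + 3 * L) + (2 + 3 * L) ^ 2 * L) * (1 + z ^ 2) ^ 2 := by
  have hL : 0 ≤ L := hσ.trans hσL
  have hE0 : 0 ≤ E := by linarith
  set β := σ ^ 2 * q / 2 with hβ
  set γ := σ ^ 3 * r / 3 with hγ
  set w := 1 + z ^ 2 with hw
  have hw1 : 1 ≤ w := by nlinarith [sq_nonneg z]
  set D := σ ^ 2 * E ^ 3 with hD
  have hD0 : 0 ≤ D := by positivity
  have hz : |z| ≤ w := by
    rw [hw]
    exact abs_le.2 ⟨by nlinarith [sq_nonneg (z + 1)], by nlinarith [sq_nonneg (z - 1)]⟩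
  have bα : |σ * p| ≤ σ * E := by
    rw [abs_mul, abs_of_nonneg hσ]
    exact mul_le_mul_of_nonneg_left hp hσ
  have hE13 : E ≤ E ^ 3 := le_self_pow₀ hE (by norm_num)
  have bβ : |β| ≤ D / 2 := by
    rw [hβ, abs_div, abs_mul, abs_of_nonneg (by positivity : 0 ≤ σ ^ 2), abs_two]
    have : σ ^ 2 * |q| ≤ σ ^ 2 * E ^ 3 :=
      mul_le_mul_of_nonneg_left (hq.trans hE13) (by positivity)
    linarith
  have bγ : |γ| ≤ L * D / 3 := by
    rw [hγ, abs_div, abs_mul, abs_of_nonneg (by positivity : 0 ≤ σ ^ 3),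
      abs_of_pos (by norm_num : (0:ℝ) < 3)]
    have h1 : σ ^ 3 * |r| ≤ σ ^ 3 * E ^ 3 := mul_le_mul_of_nonneg_left hr (by positivity)
    have h2 : σ ^ 3 * E ^ 3 ≤ L * D := by
      rw [hD, show σ ^ 3 * E ^ 3 = σ * (σ ^ 2 * E ^ 3) by ring]
      exact mul_le_mul_of_nonneg_right hσL hD0
    linarith
  have m1 : |β| * |z| ≤ D / 2 * w := mul_le_mul bβ hz (abs_nonneg _) (by positivity)
  have m2 : |γ| * z ^ 2 ≤ L * D / 3 * w :=
    mul_le_mul bγ (by linarith) (sq_nonneg z) (by positivity)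
  have m3 : |γ| * (z ^ 2 + 2) ≤ L * D / 3 * (2 * w) :=
    mul_le_mul bγ (by linarith [sq_nonneg z]) (by positivity) (by positivity)
  have hLDw : 0 ≤ L * D * w := by positivity
  have hDw : 0 ≤ D * w := by positivity
  set u := β * z + γ * (z ^ 2 + 2) with hu
  set v := 2 * β * z + 3 * γ * z ^ 2 with hv
  have bu : |u| ≤ D * (2 + 3 * L) * w := by
    refine (abs_add_le _ _).trans ?_
    rw [abs_mul, abs_mul, abs_of_nonneg (by positivity : 0 ≤ z ^ 2 + 2)]
    nlinarith
  have bv : |v| ≤ D * (2 + 3 * L) * w := by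
    refine (abs_add_le _ _).trans ?_
    rw [abs_mul, abs_mul, abs_mul, abs_mul, abs_of_nonneg (sq_nonneg z), abs_two,
      abs_of_pos (by norm_num : (0:ℝ) < 3)]
    nlinarith
  have e : tP (σ * p) β γ z - σ ^ 2 * p ^ 2 = σ * p * u + v * (σ * p) + v * u := by
    simp only [tP, hu, hv]
    ring
  have n1 : |σ * p| * |u| ≤ σ * E * (D * (2 + 3 * L) * w) :=
    mul_le_mul bα bu (abs_nonneg _) (by positivity)
  have n2 : |v| * |σ * p| ≤ D * (2 + 3 * L) * w * (σ * E) :=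
    mul_le_mul bv bα (abs_nonneg _) (by positivity)
  have n3 : |v| * |u| ≤ D * (2 + 3 * L) * w * (D * (2 + 3 * L) * w) :=
    mul_le_mul bv bu (abs_nonneg _) (by positivity)
  have k1 : σ * E * (D * (2 + 3 * L) * w) ≤ σ ^ 3 * E ^ 6 * (2 + 3 * L) * w ^ 2 := by
    have : E ^ 4 * w ≤ E ^ 6 * w ^ 2 := mul_le_mul (pow_le_pow_right₀ hE (by norm_num))
      (le_self_pow₀ hw1 (by norm_num)) (by positivity) (by positivity)
    have := mul_le_mul_of_nonneg_left this (by positivity : 0 ≤ σ ^ 3 * (2 + 3 * L))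
    rw [hD]
    linarith
  have k2 : D * (2 + 3 * L) * w * (D * (2 + 3 * L) * w) ≤
      σ ^ 3 * E ^ 6 * ((2 + 3 * L) ^ 2 * L) * w ^ 2 := by
    have := mul_le_mul_of_nonneg_left hσL
      (by positivity : 0 ≤ σ ^ 3 * E ^ 6 * (2 + 3 * L) ^ 2 * w ^ 2)
    rw [hD]
    linarith
  rw [e]
  calc |σ * p * u + v * (σ * p) + v * u| ≤ |σ * p| * |u| + |v| * |σ * p| + |v| * |u| := by
        rw [← abs_mul, ← abs_mul, ← abs_mul]
        exact abs_add_three _ _ _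
    _ ≤ _ := by linarith

lemma tP_div {s : ℝ} (hs : s ≠ 0) (α β γ z : ℝ) :
    tP (α / s) (β / s) (γ / s) z = tP α β γ z / s ^ 2 := by
  simp only [tP]
  field_simp

/-- `E (1 + Z²)²` for a standard normal variable `Z`. -/
def momW : ℝ := ∫ z, (1 + z ^ 2) ^ 2 ∂(gaussianReal 0 1)

lemma momW_nonneg : 0 ≤ momW := integral_nonneg fun z => by positivity

lemma integrable_momW : Integrable (fun z : ℝ => (1 + z ^ 2) ^ 2) (gaussianReal 0 1) := by
  open Polynomial in
  have := integrable_gauss_poly ((1 + X ^ 2) ^ 2)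
  refine this.congr ?_
  filter_upwards with x
  simp

/-- Comparison of the normalised linear Gaussian sum with its cubic perturbation. Both are
compared with the standard normal law by `stein_bound`; the linear sum has constant Stein kernel
`1`, so it contributes no error. -/
lemma cdf_sumP_close {d : ℕ} (I : Finset (Fin d)) (p q r E : Fin d → ℝ) {σ L v : ℝ}
    (hσ : 0 ≤ σ) (hσL : σ ≤ L) (hv : 0 < v) (hvs : ∑ i ∈ I, σ ^ 2 * p i ^ 2 = v)
    (hE : ∀ i, 1 ≤ E i) (hp : ∀ i, |p i| ≤ E i) (hq : ∀ i, |q i| ≤ E i)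
    (hr : ∀ i, |r i| ≤ E i ^ 3) (α β γ : Fin d → ℝ)
    (hα : ∀ i, α i = if i ∈ I then σ * p i / √v else 0)
    (hβ : ∀ i, β i = if i ∈ I then σ ^ 2 * q i / 2 / √v else 0)
    (hγ : ∀ i, γ i = if i ∈ I then σ ^ 3 * r i / 3 / √v else 0) (t : ℝ) :
    |((stdPi d) {z | sumP α 0 0 z ≤ t}).toReal - ((stdPi d) {z | sumP α β γ z ≤ t}).toReal| ≤
      2 * (σ ^ 3 * (2 * (2 + 3 * L) + (2 + 3 * L) ^ 2 * L) * momW * (∑ i ∈ I, E i ^ 6) / v) := by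
  set K := 2 * (2 + 3 * L) + (2 + 3 * L) ^ 2 * L with hK
  have hs : √v ^ 2 = v := Real.sq_sqrt hv.le
  have hs0 : √v ≠ 0 := (Real.sqrt_pos.2 hv).ne'
  have hone : ∑ i, α i ^ 2 = 1 := by
    simp_rw [hα, ite_pow, div_pow, hs, mul_pow]
    rw [zero_pow two_ne_zero, Finset.sum_ite_mem, Finset.univ_inter, ← Finset.sum_div, hvs,
      div_self hv.ne']
  refine cdf_close (stdPi d) _ _ (continuous_sumP _ _ _).measurable
    (continuous_sumP _ _ _).measurable _ (fun h hc h0 h1 => ?_) t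
  have b0 := stein_bound α 0 0 h hc h0 h1
  have b1 := stein_bound α β γ h hc h0 h1
  have z0 : ∀ z : Fin d → ℝ, ∑ i, tP (α i) ((0 : Fin d → ℝ) i) ((0 : Fin d → ℝ) i) (z i) - 1
      = 0 := by
    intro z
    rw [← hone, sub_eq_zero]
    exact Finset.sum_congr rfl fun i _ => by simp [tP, sq]
  simp only [z0, abs_zero, integral_zero, mul_zero] at b0
  have hle : ∀ z : Fin d → ℝ, |∑ i, tP (α i) (β i) (γ i) (z i) - 1| ≤
      ∑ i ∈ I, σ ^ 3 * E i ^ 6 * K / v * (1 + z i ^ 2) ^ 2 := by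
    intro z
    have e : ∑ i, tP (α i) (β i) (γ i) (z i) - 1 =
        ∑ i ∈ I, (tP (σ * p i) (σ ^ 2 * q i / 2) (σ ^ 3 * r i / 3) (z i) - σ ^ 2 * p i ^ 2) / v := by
      have : ∀ i, tP (α i) (β i) (γ i) (z i) = if i ∈ I then
          tP (σ * p i) (σ ^ 2 * q i / 2) (σ ^ 3 * r i / 3) (z i) / v else 0 := by
        intro i
        rw [hα, hβ, hγ]
        split_ifs
        · rw [tP_div hs0, hs]
        · simp [tP]
      simp_rw [this]
      rw [Finset.sum_ite_mem, Finset.univ_inter, ← Finset.sum_div, ← Finset.sum_div,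
        Finset.sum_sub_distrib, hvs, sub_div, div_self hv.ne']
    rw [e]
    refine (Finset.abs_sum_le_sum_abs _ _).trans (Finset.sum_le_sum fun i _ => ?_)
    rw [abs_div, abs_of_pos hv, div_mul_eq_mul_div]
    exact div_le_div_of_nonneg_right
      (tP_sub_sq_le hσ hσL (hE i) (hp i) (hq i) (hr i) (z i)) hv.le
  have iT : Integrable (fun z : Fin d → ℝ => ∑ i, tP (α i) (β i) (γ i) (z i) - 1) (stdPi d) :=
    (integrable_finsetSum _ fun i _ => integrable_coord i (integrable_tP _ _ _)).sub
      (integrable_const 1)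
  have iW : ∀ i : Fin d, Integrable
      (fun z : Fin d → ℝ => σ ^ 3 * E i ^ 6 * K / v * (1 + z i ^ 2) ^ 2) (stdPi d) := fun i =>
    (integrable_coord i integrable_momW).const_mul _
  have hint : ∫ z, |∑ i, tP (α i) (β i) (γ i) (z i) - 1| ∂(stdPi d) ≤
      σ ^ 3 * K * momW * (∑ i ∈ I, E i ^ 6) / v := by
    refine (integral_mono iT.abs (integrable_finsetSum _ fun i _ => iW i) hle).trans_eq ?_
    rw [integral_finsetSum _ fun i _ => iW i, Finset.mul_sum, Finset.sum_div]
    refine Finset.sum_congr rfl fun i _ => ?_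
    rw [integral_const_mul, integral_coord i (g := fun y => (1 + y ^ 2) ^ 2) (by fun_prop)]
    simp only [momW]
    ring
  have b0' : ∫ z, h (sumP α 0 0 z) ∂(stdPi d) = ∫ s, h s ∂(gaussianReal 0 1) :=
    sub_eq_zero.1 (abs_nonpos_iff.1 b0)
  rw [b0', abs_sub_comm]
  exact b1.trans (mul_le_mul_of_nonneg_left hint zero_le_two)

/-! ### The proposal law, and growth of the derivatives of `log ρ` -/

lemma gaussPi_eq_map (l : ℝ) (d : ℕ) (x : Fin d → ℝ) :
    gaussPi l d x = (stdPi d).map (fun z i => x i + l / √d * z i) := by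
  unfold gaussPi stdPi
  have := Measure.pi_map_pi (μ := fun _ : Fin d => gaussianReal 0 1)
    (f := fun i y => x i + l / √d * y) (fun i => by fun_prop)
  rw [this]
  congr 1
  funext i
  have e : (fun y : ℝ => x i + l / √d * y) = (fun y => x i + y) ∘ (fun y => l / √d * y) := rfl
  rw [e, ← Measure.map_map (by fun_prop) (by fun_prop), gaussianReal_map_const_mul,
    gaussianReal_map_const_add]
  congr 1
  · simp
  · ext
    rw [Real.coe_toNNReal _ (by positivity)]
    simp [div_pow]

lemma map_gaussPi_Iic (l : ℝ) (d : ℕ) (x : Fin d → ℝ) (F : (Fin d → ℝ) → ℝ) (hF : Measurable F)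
    (t : ℝ) : (Measure.map F (gaussPi l d x)) (Iic t) =
      (stdPi d) {z | F (fun i => x i + l / √d * z i) ≤ t} := by
  rw [gaussPi_eq_map, Measure.map_map hF (by fun_prop),
    Measure.map_apply (hF.comp (by fun_prop)) measurableSet_Iic]
  rfl

lemma measurable_Nf (ρ : ℝ → ℝ) (l : ℝ) (d : ℕ) (x : Fin d → ℝ) :
    Measurable fun Y => Nf ρ l d x Y := by
  unfold Nf
  fun_prop

lemma measurable_SK (ρ : ℝ → ℝ) (c : ℝ) (d : ℕ) (x : Fin d → ℝ) :
    Measurable fun Y => SK ρ c d x Y := by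
  unfold SK Kf
  fun_prop

/-- Membership in `Sⁿ` bounds the derivatives of orders one and two by a multiple of
`exp (|x| / 6)`. -/
lemma exists_bound {ρ : ℝ → ℝ} (hlog : MemS 4 fun x => Real.log (ρ x)) :
    ∃ B : ℝ, 1 ≤ B ∧ (∀ x, |dl ρ x| ≤ B * Real.exp (|x| / 6)) ∧
      ∀ x, |d2l ρ x| ≤ B * Real.exp (|x| / 6) := by
  have key : ∀ i ≤ 4, ∃ B, ∀ x, |iteratedDeriv i (fun x => Real.log (ρ x)) x| ≤
      B * Real.exp (|x| / 6) := by
    intro i hi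
    obtain ⟨B, hB⟩ := hlog.2 (1 / 6) (by norm_num) i hi
    refine ⟨B, fun x => ?_⟩
    have := hB (mem_range_self x)
    rw [Real.exp_neg, inv_mul_le_iff₀ (Real.exp_pos _)] at this
    rw [mul_comm, show |x| / 6 = 1 / 6 * |x| by ring]
    exact this
  obtain ⟨B1, h1⟩ := key 1 (by norm_num)
  obtain ⟨B2, h2⟩ := key 2 (by norm_num)
  refine ⟨max 1 (max B1 B2), le_max_left _ _, fun x => ?_, fun x => ?_⟩
  · have := h1 x
    rw [iteratedDeriv_one] at this
    refine this.trans (mul_le_mul_of_nonneg_right ?_ (Real.exp_pos _).le)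
    exact (le_max_left _ _).trans (le_max_right _ _)
  · have := h2 x
    rw [iteratedDeriv_succ, iteratedDeriv_one] at this
    refine this.trans (mul_le_mul_of_nonneg_right ?_ (Real.exp_pos _).le)
    exact (le_max_right _ _).trans (le_max_right _ _)

/-! ### The comparison of `Nf` and `SK` -/

/-- **Lemma.** With `Φ_K^d` and `Φ_𝒩^d` the distribution functions of `Σ_{i=2}^d K(x_i,Y_i)`
and `𝒩(x,Y)`, there is a constant `C > 0` with
`sup_t |Φ_𝒩^d(t) - Φ_K^d(t)| ≤ C d^{-1/2}` for every `d ∈ ℕ` and every `x ∈ 𝒜_d`. -/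
theorem stmt11 (ρ : ℝ → ℝ) (hmeas : Measurable ρ) (hpos : ∀ x, 0 < ρ x)
    (hint : ∫ x, ρ x = 1) (hlog : MemS 4 fun x => Real.log (ρ x))
    (htail : SuperExpTails ρ) (l : ℝ) (hl : 0 < l)
    (c : ℝ) (hc : 0 < c) (hA : 0 < ∫ x in Aset ρ c, ρ x)
    (a : ℕ → ℝ) (ha : Sluggish a) :
    ∃ C > (0:ℝ), ∀ d : ℕ, ∀ x ∈ Ad ρ c a d, ∀ t : ℝ,
      |((Measure.map (fun Y => Nf ρ l d x Y) (gaussPi l d x)) (Set.Iic t)).toReal -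
        ((Measure.map (fun Y => SK ρ c d x Y) (gaussPi l d x)) (Set.Iic t)).toReal| ≤
          C / Real.sqrt d := by
  obtain ⟨B, hB1, hBp, hBq⟩ := exists_bound hlog
  set K := 2 * (2 + 3 * l) + (2 + 3 * l) ^ 2 * l with hK
  set M := |2 * rhoE ρ (fun t => Real.exp |t|)| with hM
  set A := ∫ t in Aset ρ c, ρ t with hAdef
  have hK0 : 0 ≤ K := by positivity
  have hM0 : 0 ≤ M := abs_nonneg _
  set v₀ := l ^ 2 * A / (4 * c ^ 2) with hv₀
  have hv₀p : 0 < v₀ := by positivity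
  have hW := momW_nonneg
  refine ⟨2 * (l ^ 3 * K * momW * (B ^ 6 * M) / v₀) + 1, by positivity, fun d x hx t => ?_⟩
  rw [map_gaussPi_Iic _ _ _ _ (measurable_Nf ρ l d x),
    map_gaussPi_Iic _ _ _ _ (measurable_SK ρ c d x)]
  rcases Nat.lt_or_ge d 2 with hd | hd
  · -- For `d ≤ 1` both sums are empty.
    have hr : restIdx d = ∅ := by
      ext i
      simp only [restIdx, Finset.mem_filter, Finset.mem_univ, true_and, Finset.notMem_empty,
        iff_false, not_not]
      omega
    have h1 : ∀ Y, Nf ρ l d x Y = 0 := fun Y => by simp [Nf, hr]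
    have h2 : ∀ Y, SK ρ c d x Y = 0 := fun Y => by simp [SK, hr]
    simp only [h1, h2, sub_self, abs_zero]
    positivity
  obtain ⟨hx1, hx2, -, -⟩ := hx
  have hd2 : (2:ℝ) ≤ d := by exact_mod_cast hd
  have hd0 : (0:ℝ) < d := by linarith
  have hd1 : (0:ℝ) < (d:ℝ) - 1 := by linarith
  set I := restIdx d with hI
  set s := √(d:ℝ) with hs
  have hs0 : 0 < s := Real.sqrt_pos.2 hd0
  have hs2 : s ^ 2 = d := Real.sq_sqrt hd0.le
  have hs1 : 1 ≤ s := Real.one_le_sqrt.2 (by linarith)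
  set σ := l / s with hσ
  have hσ0 : 0 < σ := by positivity
  have hσl : σ ≤ l := div_le_self hl.le hs1
  set p : Fin d → ℝ := fun i => dl ρ (x i) with hp
  set q : Fin d → ℝ := fun i => d2l ρ (x i) with hq
  set r : Fin d → ℝ := fun i =>
    (dl ρ (x i)) ^ 3 * (Aset ρ c).indicator (fun _ => (1:ℝ)) (x i) with hr
  set E : Fin d → ℝ := fun i => B * Real.exp (|x i| / 6) with hE
  set v := ∑ i ∈ I, σ ^ 2 * p i ^ 2 with hv
  have hE1 : ∀ i, 1 ≤ E i := fun i =>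
    one_le_mul_of_one_le_of_one_le hB1 (Real.one_le_exp (by positivity))
  have hrE : ∀ i, |r i| ≤ E i ^ 3 := by
    intro i
    have h1 : |dl ρ (x i)| ^ 3 ≤ E i ^ 3 := pow_le_pow_left₀ (abs_nonneg _) (hBp _) 3
    simp only [hr, abs_mul, abs_pow]
    by_cases hi : x i ∈ Aset ρ c
    · simpa [hi] using h1
    · have : (0:ℝ) ≤ E i ^ 3 := (by positivity : (0:ℝ) ≤ |dl ρ (x i)| ^ 3).trans h1
      simpa [hi] using this
  -- The variance of the linear part is bounded below because a fixed proportion of the `xᵢ`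
  -- lie in `A`, where `|(log ρ)'| > 1 / c`.
  have hvlow : v₀ ≤ v := by
    have h1 : A / 2 * ((d:ℝ) - 1) ≤
        ∑ i ∈ I, (Aset ρ c).indicator (fun _ => (1:ℝ)) (x i) := by
      rw [one_div_mul_eq_div, lt_div_iff₀ hd1] at hx2
      exact hx2.le
    have h2 : ∀ i ∈ I, σ ^ 2 / c ^ 2 * (Aset ρ c).indicator (fun _ => (1:ℝ)) (x i) ≤
        σ ^ 2 * p i ^ 2 := by
      intro i _
      by_cases hi : x i ∈ Aset ρ c
      · have h3 : 1 / c < |dl ρ (x i)| := hi.2.1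
        have h4 : (1 / c) ^ 2 ≤ |dl ρ (x i)| ^ 2 := pow_le_pow_left₀ (by positivity) h3.le 2
        rw [sq_abs] at h4
        rw [indicator_of_mem hi, mul_one, div_eq_mul_one_div, ← one_div_pow]
        exact mul_le_mul_of_nonneg_left h4 (by positivity)
      · rw [indicator_of_notMem hi, mul_zero]
        positivity
    have h3 := Finset.sum_le_sum h2
    rw [← Finset.mul_sum] at h3
    refine le_trans ?_ (le_trans (mul_le_mul_of_nonneg_left h1 (by positivity)) h3)
    rw [hv₀, hσ, div_pow, hs2]
    rw [show l ^ 2 / (d:ℝ) / c ^ 2 * (A / 2 * ((d:ℝ) - 1)) =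
      l ^ 2 * A / (4 * c ^ 2) * (2 * ((d:ℝ) - 1) / d) by field_simp; ring]
    refine le_mul_of_one_le_right (by positivity) ?_
    rw [one_le_div hd0]
    linarith
  have hvp : 0 < v := hv₀p.trans_le hvlow
  have hsv : √v ≠ 0 := (Real.sqrt_pos.2 hvp).ne'
  have hEsum : ∑ i ∈ I, E i ^ 6 ≤ B ^ 6 * M * d := by
    have h1 : ∑ i ∈ I, Real.exp |x i| ≤ M * d := by
      rw [one_div_mul_eq_div, div_lt_iff₀ hd1] at hx1
      refine hx1.le.trans (mul_le_mul (le_abs_self _) (by linarith) hd1.le hM0)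
    have h2 : ∀ i, E i ^ 6 = B ^ 6 * Real.exp |x i| := fun i => by
      simp only [hE]
      rw [mul_pow, ← Real.exp_nat_mul]
      congr 2
      push_cast
      ring
    simp_rw [h2]
    rw [← Finset.mul_sum, mul_assoc]
    exact mul_le_mul_of_nonneg_left h1 (by positivity)
  set α : Fin d → ℝ := fun i => if i ∈ I then σ * p i / √v else 0 with hα
  set β : Fin d → ℝ := fun i => if i ∈ I then σ ^ 2 * q i / 2 / √v else 0 with hβ
  set γ : Fin d → ℝ := fun i => if i ∈ I then σ ^ 3 * r i / 3 / √v else 0 with hγ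
  set m := σ ^ 2 / 2 * ∑ i ∈ I, q i with hm
  have hsum : ∀ (β' γ' : Fin d → ℝ) (b g : Fin d → ℝ),
      (∀ i, β' i = if i ∈ I then b i / √v else 0) →
      (∀ i, γ' i = if i ∈ I then g i / √v else 0) → ∀ z,
      √v * sumP α β' γ' z = ∑ i ∈ I, gP (σ * p i) (b i) (g i) (z i) := by
    intro β' γ' b g hb hg z
    have : ∀ i, gP (α i) (β' i) (γ' i) (z i) =
        if i ∈ I then gP (σ * p i) (b i) (g i) (z i) / √v else 0 := by
      intro i
      rw [hb, hg]
      simp only [hα, gP]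
      split_ifs
      · ring
      · ring
    unfold sumP
    simp_rw [this]
    rw [Finset.sum_ite_mem, Finset.univ_inter, ← Finset.sum_div, mul_div_cancel₀ _ hsv]
  have hN : ∀ z, Nf ρ l d x (fun i => x i + σ * z i) = m + √v * sumP α 0 0 z := by
    intro z
    rw [hsum 0 0 0 0 (fun i => by simp) (fun i => by simp)]
    have e : l ^ 2 / (2 * (d:ℝ)) = σ ^ 2 / 2 := by
      rw [hσ, div_pow, hs2]
      field_simp
    simp only [Nf, e, hm, hq, hp]
    congr 1
    refine Finset.sum_congr rfl fun i _ => ?_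
    simp only [gP, Pi.zero_apply]
    ring
  have hS : ∀ z, SK ρ c d x (fun i => x i + σ * z i) = m + √v * sumP α β γ z := by
    intro z
    rw [hsum β γ (fun i => σ ^ 2 * q i / 2) (fun i => σ ^ 3 * r i / 3) (fun i => rfl)
      (fun i => rfl), hm, Finset.mul_sum, ← Finset.sum_add_distrib]
    simp only [SK]
    refine Finset.sum_congr rfl fun i _ => ?_
    simp only [Kf, gP, hq, hp, hr]
    ring
  have hset : ∀ F : (Fin d → ℝ) → ℝ,
      {z | m + √v * F z ≤ t} = {z | F z ≤ (t - m) / √v} := by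
    intro F
    ext z
    simp only [mem_ofPred_eq]
    rw [le_div_iff₀ (Real.sqrt_pos.2 hvp)]
    constructor <;> intro h <;> linarith
  simp only [hN, hS]
  rw [hset, hset]
  refine (cdf_sumP_close I p q r E hσ0.le hσl hvp rfl hE1 (fun i => hBp _) (fun i => hBq _)
    hrE α β γ (fun i => rfl) (fun i => rfl) (fun i => rfl) _).trans ?_
  have hσ3 : σ ^ 3 * d = l ^ 3 / s := by
    rw [hσ, ← hs2]
    field_simp
  have hfin : σ ^ 3 * K * momW * (∑ i ∈ I, E i ^ 6) / v ≤
      l ^ 3 * K * momW * (B ^ 6 * M) / v₀ / s := by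
    have h1 : σ ^ 3 * K * momW * (∑ i ∈ I, E i ^ 6) ≤ σ ^ 3 * K * momW * (B ^ 6 * M * d) :=
      mul_le_mul_of_nonneg_left hEsum (by positivity)
    refine (div_le_div₀ (by positivity) h1 hv₀p hvlow).trans_eq ?_
    rw [show σ ^ 3 * K * momW * (B ^ 6 * M * d) = (σ ^ 3 * d) * (K * momW * (B ^ 6 * M)) by ring,
      hσ3]
    field_simp
  have h1s : 0 ≤ 1 / s := by positivity
  rw [add_div, mul_div_assoc (2:ℝ)]
  linarith
end
end

section
/- Let f ∈ S⁰ satisfy ρ(f) = 0 and ρ(f²) > 0, and let {a_d}_{d∈ℕ} be a sluggish sequence. If for each d the random vector (X_{1,d},…,X_{d,d}) has law with density ρ_d, then for every t > 0 the inequality P[|(1/(d−1))·Σ_{i=2}^d f(X_{i,d})| ≥ t·a_d/√d] ≤ exp(−t²a_d²/(3ρ(f²))) holds for all but finitely many d ∈ ℕ. -/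
/-!
The bound is a moderate-deviation estimate, proved by truncation and a Chernoff bound.

Write `σ² = ρ(f²)`, `A = t² a_d² / σ²` and truncate at the level `L = d^{1/4}`. If no `|f(X_i)|`
exceeds `L`, then `∑ f(X_i)` equals `∑ min (f(X_i)) L`, and likewise for `-f`. Truncating from
above only decreases the mean and the square, so `exp u ≤ 1 + u + (11/20) u²` for `u ≤ 1/10`
gives `E exp(λ min(f, L)) ≤ exp((11/20) λ² σ²)` whenever `λ L ≤ 1/10`
(`mgf_min_le`, `chernoff_min`). For `λ = t a_d / (σ² √d)` this condition holds eventually, because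
`a_d = O(√log d)`, and each one-sided Chernoff bound is at most `exp(-5A/12)`.

The probability that some `|f(X_i)|` exceeds `L` is at most `d · ρ(f^{4k}) / d^k`
(`measure_exists_gt`). All moments of `f` are finite since `f` grows sub-exponentially and the
tails of `ρ` are super-exponential (`integrable_pow_mul`). As `A / 3 ≤ c log d` for some `c`, a
large `k` makes this probability negligible against `exp(-A/3)`. Since `A → ∞`, so is
`2 exp(-5A/12)`.
-/


open MeasureTheory ProbabilityTheory Filter Set

noncomputable section

/-! ### Truncated Chernoff bound -/

/-- Second-order bound on `exp`, valid for arbitrarily negative `u`, with a constant close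
to `1/2`. -/
lemma exp_le_quadratic {u : ℝ} (hu : u ≤ 1 / 10) : Real.exp u ≤ 1 + u + 11 / 20 * u ^ 2 := by
  rcases le_total 0 u with h0 | h0
  · have h := Real.exp_bound (x := u) (by rw [abs_of_nonneg h0]; linarith) (n := 3) (by norm_num)
    have h' := (abs_le.1 h).2
    norm_num [Finset.sum_range_succ, Nat.factorial, abs_of_nonneg h0] at h'
    nlinarith [mul_nonneg (sq_nonneg u) (sub_nonneg.2 hu)]
  · have h := Real.quadratic_le_exp_of_nonneg (x := -u) (by linarith)
    rw [Real.exp_neg] at h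
    have hp := Real.exp_pos u
    have h1 : (1 + -u + (-u) ^ 2 / 2) * Real.exp u ≤ 1 := by
      calc _ ≤ (Real.exp u)⁻¹ * Real.exp u := by gcongr
        _ = 1 := inv_mul_cancel₀ (ne_of_gt hp)
    -- `(1 + v + v²/2) (1 - v + v²/2) = 1 + v⁴/4 ≥ 1` with `v = -u`
    have h2 : 1 ≤ (1 + -u + (-u) ^ 2 / 2) * (1 + u + u ^ 2 / 2) := by
      nlinarith [sq_nonneg (u ^ 2)]
    have h3 : Real.exp u ≤ 1 + u + u ^ 2 / 2 := by
      have : 0 < 1 + -u + (-u) ^ 2 / 2 := by nlinarith [sq_nonneg u]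
      exact le_of_mul_le_mul_left (h1.trans h2) this
    nlinarith [sq_nonneg u]

/-- Truncating a centred variable from above does not increase its mean, so no correction
for the mean enters the bound. -/
lemma mgf_min_le {μ : Measure ℝ} [IsProbabilityMeasure μ] {f : ℝ → ℝ}
    (hf : Integrable f μ) (hf2 : Integrable (fun x => f x ^ 2) μ) (hf0 : ∫ x, f x ∂μ = 0)
    {L lam : ℝ} (hL : 0 ≤ L) (hlam : 0 ≤ lam) (hlL : lam * L ≤ 1 / 10) :
    mgf (fun x => min (f x) L) μ lam ≤ Real.exp (11 / 20 * lam ^ 2 * ∫ x, f x ^ 2 ∂μ) := by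
  have key : ∀ x, Real.exp (lam * min (f x) L) ≤
      1 + lam * f x + 11 / 20 * lam ^ 2 * f x ^ 2 := by
    intro x
    have h1 : lam * min (f x) L ≤ 1 / 10 :=
      (mul_le_mul_of_nonneg_left (min_le_right _ _) hlam).trans hlL
    have h2 : lam * min (f x) L ≤ lam * f x := mul_le_mul_of_nonneg_left (min_le_left _ _) hlam
    have h3 : (min (f x) L) ^ 2 ≤ f x ^ 2 := by
      rcases le_total (f x) L with h | h
      · rw [min_eq_left h]
      · rw [min_eq_right h]; gcongr
    have h4 := exp_le_quadratic h1
    have h5 : (lam * min (f x) L) ^ 2 ≤ lam ^ 2 * f x ^ 2 := by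
      rw [mul_pow]; gcongr
    linarith
  have hlin : Integrable (fun x => 1 + lam * f x) μ := (integrable_const 1).add (hf.const_mul lam)
  have hint : Integrable (fun x => 1 + lam * f x + 11 / 20 * lam ^ 2 * f x ^ 2) μ :=
    hlin.add (hf2.const_mul _)
  calc mgf (fun x => min (f x) L) μ lam
      ≤ ∫ x, (1 + lam * f x + 11 / 20 * lam ^ 2 * f x ^ 2) ∂μ :=
        integral_mono_of_nonneg (ae_of_all _ fun x => (Real.exp_pos _).le) hint
          (ae_of_all _ key)
    _ = 11 / 20 * lam ^ 2 * (∫ x, f x ^ 2 ∂μ) + 1 := by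
        rw [integral_add hlin (hf2.const_mul _),
          integral_add (integrable_const 1) (hf.const_mul lam), integral_const_mul,
          integral_const_mul, hf0]
        simp
        ring
    _ ≤ _ := Real.add_one_le_exp _

lemma chernoff_min {μ : Measure ℝ} [IsProbabilityMeasure μ] {f : ℝ → ℝ} (hm : Measurable f)
    (hf : Integrable f μ) (hf2 : Integrable (fun x => f x ^ 2) μ) (hf0 : ∫ x, f x ∂μ = 0)
    {L lam : ℝ} (hL : 0 ≤ L) (hlam : 0 ≤ lam) (hlL : lam * L ≤ 1 / 10)
    (d : ℕ) (s : Finset (Fin d)) (y : ℝ) :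
    (Measure.pi fun _ : Fin d => μ).real {x | y ≤ ∑ i ∈ s, min (f (x i)) L} ≤
      Real.exp (-lam * y + d * (11 / 20 * lam ^ 2 * ∫ x, f x ^ 2 ∂μ)) := by
  have hgm : Measurable fun x => min (f x) L := hm.min measurable_const
  set X : Fin d → (Fin d → ℝ) → ℝ := fun i x => min (f (x i)) L with hX
  have hXm : ∀ i, Measurable (X i) := fun i => hgm.comp (measurable_pi_apply i)
  have hind : iIndepFun X (Measure.pi fun _ : Fin d => μ) :=
    iIndepFun_pi (μ := fun _ : Fin d => μ) (X := fun _ x => min (f x) L)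
      fun _ => hgm.aemeasurable
  have hmgf : ∀ i, mgf (X i) (Measure.pi fun _ : Fin d => μ) lam =
      mgf (fun x => min (f x) L) μ lam := by
    intro i
    have hmp := measurePreserving_eval (fun _ : Fin d => μ) i
    have h := mgf_map (μ := Measure.pi fun _ : Fin d => μ) (X := fun x => min (f x) L) (t := lam)
      hmp.measurable.aemeasurable
      ((by fun_prop : Measurable fun x => Real.exp (lam * min (f x) L)).aestronglyMeasurable)
    rw [hmp.map_eq] at h
    exact h.symm
  have hi : Integrable (fun x => Real.exp (lam * (∑ i ∈ s, X i) x))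
      (Measure.pi fun _ : Fin d => μ) :=
    hind.integrable_exp_mul_sum hXm fun i _ =>
      integrable_exp_mul_of_le lam L hlam (hXm i).aemeasurable
        (ae_of_all _ fun x => min_le_right _ _)
  have h := measure_ge_le_exp_mul_mgf (μ := Measure.pi fun _ : Fin d => μ) y hlam hi
  rw [hind.mgf_sum hXm, Finset.prod_congr rfl (fun i _ => hmgf i), Finset.prod_const] at h
  simp only [Finset.sum_apply, hX] at h
  refine h.trans ?_
  rw [Real.exp_add]
  gcongr
  have h2 : 0 ≤ 11 / 20 * lam ^ 2 * ∫ x, f x ^ 2 ∂μ :=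
    mul_nonneg (by positivity) (integral_nonneg fun x => sq_nonneg _)
  calc _ ≤ Real.exp (11 / 20 * lam ^ 2 * ∫ x, f x ^ 2 ∂μ) ^ s.card :=
        pow_le_pow_left₀ mgf_nonneg (mgf_min_le hf hf2 hf0 hL hlam hlL) _
    _ ≤ Real.exp (11 / 20 * lam ^ 2 * ∫ x, f x ^ 2 ∂μ) ^ d :=
        pow_le_pow_right₀ (Real.one_le_exp h2) (by simpa using s.card_le_univ)
    _ = _ := by rw [← Real.exp_nat_mul]

lemma measure_exists_gt {μ : Measure ℝ} [IsProbabilityMeasure μ] {f : ℝ → ℝ}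
    (hm : Measurable f) (k : ℕ) (hk : Integrable (fun x => f x ^ (4 * k)) μ)
    {L : ℝ} (hL : 0 < L) (d : ℕ) :
    (Measure.pi fun _ : Fin d => μ).real {x | ∃ i, L < |f (x i)|} ≤
      d * ((∫ x, f x ^ (4 * k) ∂μ) / L ^ (4 * k)) := by
  have hev : Even (4 * k) := ⟨2 * k, by ring⟩
  have hone : μ.real {x | L < |f x|} ≤ (∫ x, f x ^ (4 * k) ∂μ) / L ^ (4 * k) := by
    rw [le_div_iff₀' (by positivity)]
    refine le_trans ?_ (mul_meas_ge_le_integral_of_nonneg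
      (ae_of_all _ fun x => hev.pow_nonneg _) hk (L ^ (4 * k)))
    gcongr
    · exact measure_ne_top _ _
    · intro hx
      rw [← hev.pow_abs (f _)]
      gcongr
  have hset : {x : Fin d → ℝ | ∃ i, L < |f (x i)|} = ⋃ i, {x | L < |f (x i)|} := by
    ext; simp
  rw [hset]
  refine (measureReal_iUnion_fintype_le _).trans ?_
  have : ∀ i : Fin d, (Measure.pi fun _ : Fin d => μ).real {x | L < |f (x i)|} =
      μ.real {x | L < |f x|} := by
    intro i
    have hmp := measurePreserving_eval (fun _ : Fin d => μ) i
    exact hmp.measureReal_preimage (measurableSet_lt measurable_const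
      (by fun_prop : Measurable fun x => |f x|)).nullMeasurableSet
  simp only [this, Finset.sum_const, Finset.card_univ, Fintype.card_fin, nsmul_eq_mul]
  gcongr

/-! ### Finiteness of moments -/

/-- Super-exponential tails make `log ρ(x) + 3|x|` eventually decreasing in `|x|`, so it is
bounded above; any other rate in place of `3` would do. -/
lemma density_le {ρ : ℝ → ℝ} (hpos : ∀ x, 0 < ρ x)
    (hlog : MemS 4 fun x => Real.log (ρ x)) (htail : SuperExpTails ρ) :
    ∃ C, 0 < C ∧ ∀ x, ρ x ≤ C * Real.exp (-(3 * |x|)) := by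
  set h : ℝ → ℝ := fun x => Real.log (ρ x) with hh
  have hd : Differentiable ℝ h := hlog.1.differentiable (by norm_num)
  obtain ⟨R, hR⟩ := Filter.eventually_atTop.1 (htail.1.eventually_le_atBot (-3))
  obtain ⟨R', hR'⟩ := Filter.eventually_atBot.1 (htail.2.eventually_ge_atTop 3)
  set T := max (max R (-R')) 0 with hT
  have hT0 : 0 ≤ T := le_max_right _ _
  have hTR : R ≤ T := (le_max_left _ _).trans (le_max_left _ _)
  have hTR' : -T ≤ R' := by
    have : -R' ≤ T := (le_max_right _ _).trans (le_max_left _ _)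
    linarith
  have hcont : Continuous fun x => h x + 3 * |x| := hd.continuous.add (by fun_prop)
  obtain ⟨B, hB⟩ := (isCompact_Icc (a := -T) (b := T)).bddAbove_image hcont.continuousOn
  have hB' : ∀ x ∈ Icc (-T) T, h x + 3 * |x| ≤ B := fun x hx => hB ⟨x, hx, rfl⟩
  have hall : ∀ x, h x + 3 * |x| ≤ B := by
    intro x
    rcases lt_or_ge T x with hx | hx
    · have h1 := (convex_Ici T).image_sub_le_mul_sub_of_deriv_le hd.continuous.continuousOn
        hd.differentiableOn (C := -3) (fun z hz => by
          rw [interior_Ici] at hz; exact hR z (hTR.trans hz.le)) T self_mem_Ici x hx.le hx.le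
      have h2 := hB' T ⟨by linarith, le_rfl⟩
      rw [abs_of_nonneg hT0] at h2
      rw [abs_of_nonneg (hT0.trans hx.le)]
      linarith
    · rcases lt_or_ge x (-T) with hx' | hx'
      · have h1 := (convex_Iic (-T)).mul_sub_le_image_sub_of_le_deriv hd.continuous.continuousOn
          hd.differentiableOn (C := 3) (fun z hz => by
            rw [interior_Iic] at hz; exact hR' z (le_trans (le_of_lt hz) hTR'))
          x hx'.le (-T) self_mem_Iic hx'.le
        have h2 := hB' (-T) ⟨le_rfl, by linarith⟩
        rw [abs_neg, abs_of_nonneg hT0] at h2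
        rw [abs_of_nonpos (by linarith)]
        linarith
      · exact hB' x ⟨hx', hx⟩
  refine ⟨Real.exp B, Real.exp_pos _, fun x => ?_⟩
  rw [← Real.exp_add, ← Real.exp_log (hpos x)]
  exact Real.exp_le_exp.2 (by have := hall x; simp only [hh] at this; linarith)

lemma integrable_pow_mul {ρ : ℝ → ℝ} (hmeas : Measurable ρ) (hpos : ∀ x, 0 < ρ x)
    (hlog : MemS 4 fun x => Real.log (ρ x)) (htail : SuperExpTails ρ)
    {f : ℝ → ℝ} (hf : MemS 0 f) (m : ℕ) : Integrable fun x => f x ^ m * ρ x := by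
  obtain ⟨C, hC, hρ⟩ := density_le hpos hlog htail
  have hfc : Continuous f := hf.1.continuous
  -- growth at rate `s = 1/(m+1)`, so that `|f|^m` grows at most like `exp |x|`
  obtain ⟨B, hB⟩ := hf.2 (1 / ((m : ℝ) + 1)) (by positivity) 0 le_rfl
  have hB' : ∀ x, |f x| ≤ B * Real.exp (1 / ((m : ℝ) + 1) * |x|) := by
    intro x
    have := hB ⟨x, rfl⟩
    simp only [iteratedDeriv_zero, Real.exp_neg] at this
    rwa [inv_mul_le_iff₀ (Real.exp_pos _), mul_comm] at this
  have hB0 : 0 ≤ B := by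
    have := (abs_nonneg _).trans (hB' 0)
    simpa using this
  have hpow : ∀ x, |f x| ^ m ≤ B ^ m * Real.exp |x| := by
    intro x
    calc |f x| ^ m ≤ (B * Real.exp (1 / ((m : ℝ) + 1) * |x|)) ^ m := by gcongr; exact hB' x
      _ = B ^ m * Real.exp (m * (1 / ((m : ℝ) + 1) * |x|)) := by
        rw [mul_pow, ← Real.exp_nat_mul]
      _ ≤ _ := by
        gcongr
        rw [← mul_assoc]
        apply mul_le_of_le_one_left (abs_nonneg _)
        rw [mul_one_div, div_le_one (by positivity)]
        linarith
  refine (integrable_inv_one_add_sq.const_mul (B ^ m * C)).mono'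
    ((hfc.measurable.pow_const m).mul hmeas).aestronglyMeasurable (ae_of_all _ fun x => ?_)
  rw [norm_mul, norm_pow, Real.norm_eq_abs, Real.norm_eq_abs, abs_of_pos (hpos x)]
  calc |f x| ^ m * ρ x ≤ (B ^ m * Real.exp |x|) * (C * Real.exp (-(3 * |x|))) := by
        gcongr
        · exact (hpos x).le
        · exact hpow x
        · exact hρ x
    _ = B ^ m * C * Real.exp (-(2 * |x|)) := by
        rw [show -(2 * |x|) = |x| + -(3 * |x|) by ring, Real.exp_add]; ring
    _ ≤ B ^ m * C * (1 + x ^ 2)⁻¹ := by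
        gcongr
        rw [Real.exp_neg]
        apply inv_anti₀ (by positivity)
        have := Real.quadratic_le_exp_of_nonneg (x := 2 * |x|) (by positivity)
        nlinarith [sq_abs x, abs_nonneg x]

/-! ### Moderate deviations -/

/-- Truncation plus the two one-sided Chernoff bounds. -/
lemma two_sided_bound {μ : Measure ℝ} [IsProbabilityMeasure μ] {f : ℝ → ℝ} (hm : Measurable f)
    (hi : ∀ m : ℕ, Integrable (fun x => f x ^ m) μ) (hf0 : ∫ x, f x ∂μ = 0)
    {L lam : ℝ} (hL : 0 < L) (hlam : 0 ≤ lam) (hlL : lam * L ≤ 1 / 10)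
    (d : ℕ) (s : Finset (Fin d)) (y : ℝ) (k : ℕ) :
    (Measure.pi fun _ : Fin d => μ).real {x | y ≤ |∑ i ∈ s, f (x i)|} ≤
      2 * Real.exp (-lam * y + d * (11 / 20 * lam ^ 2 * ∫ x, f x ^ 2 ∂μ)) +
        d * ((∫ x, f x ^ (4 * k) ∂μ) / L ^ (4 * k)) := by
  have hf : Integrable f μ := by simpa using hi 1
  have h1 := chernoff_min hm hf (hi 2) hf0 hL.le hlam hlL d s y
  have h2 := chernoff_min (f := fun x => -f x) hm.neg hf.neg (by simpa using hi 2)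
    (by rw [integral_neg, hf0, neg_zero]) hL.le hlam hlL d s y
  simp only [neg_sq] at h2
  have h3 := measure_exists_gt hm k (hi (4 * k)) hL d
  have hsub : {x : Fin d → ℝ | y ≤ |∑ i ∈ s, f (x i)|} ⊆
      ({x | y ≤ ∑ i ∈ s, min (f (x i)) L} ∪ {x | y ≤ ∑ i ∈ s, min (-f (x i)) L}) ∪
        {x | ∃ i, L < |f (x i)|} := by
    intro x hx
    by_cases hex : ∃ i, L < |f (x i)|
    · exact Or.inr hex
    push Not at hex
    left
    have e1 : ∀ i, min (f (x i)) L = f (x i) := fun i =>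
      min_eq_left ((le_abs_self _).trans (hex i))
    have e2 : ∀ i, min (-f (x i)) L = -f (x i) := fun i =>
      min_eq_left ((neg_le_abs _).trans (hex i))
    simp only [mem_union, mem_ofPred_eq, e1, e2, Finset.sum_neg_distrib] at hx ⊢
    exact le_abs.1 hx
  refine (measureReal_mono hsub).trans ((measureReal_union_le _ _).trans ?_)
  have := measureReal_union_le (μ := Measure.pi fun _ : Fin d => μ)
    {x | y ≤ ∑ i ∈ s, min (f (x i)) L} {x | y ≤ ∑ i ∈ s, min (-f (x i)) L}
  linarith

lemma Sluggish.exists_sq_le {a : ℕ → ℝ} (ha : Sluggish a) :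
    ∃ K : ℝ, 0 < K ∧ ∀ d : ℕ, 2 ≤ d → a d ^ 2 ≤ K * Real.log d := by
  obtain ⟨hpos, -, M, hM⟩ := ha
  refine ⟨M ^ 2 + 1, by positivity, fun d hd => ?_⟩
  have hlog : 0 < Real.log d := Real.log_pos (by exact_mod_cast hd)
  have h := hM d hd
  rw [div_le_iff₀ (Real.sqrt_pos.2 hlog)] at h
  have h2 := pow_le_pow_left₀ (hpos d).le h 2
  rw [mul_pow, Real.sq_sqrt hlog.le] at h2
  linarith

/-- **Proposition.** For `f ∈ S⁰` with `ρ(f) = 0`, `ρ(f²) > 0` and a sluggish sequence `a`,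
for every `t > 0` we have
`P[|(1/(d-1)) Σ_{i=2}^d f(X_i)| ≥ t a_d/√d] ≤ exp(-t² a_d²/(3ρ(f²)))` for all but finitely
many `d`, where `(X_1,…,X_d) ~ ρ_d`. -/
theorem stmt14 (ρ : ℝ → ℝ) (hmeas : Measurable ρ) (hpos : ∀ x, 0 < ρ x)
    (hint : ∫ x, ρ x = 1) (hlog : MemS 4 fun x => Real.log (ρ x))
    (htail : SuperExpTails ρ)
    (f : ℝ → ℝ) (hf : MemS 0 f) (hf0 : rhoE ρ f = 0)
    (hf2 : 0 < rhoE ρ fun x => f x ^ 2)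
    (a : ℕ → ℝ) (ha : Sluggish a) (t : ℝ) (ht : 0 < t) :
    ∀ᶠ d : ℕ in atTop,
      pm ρ d {x | t * a d / Real.sqrt d ≤ |(1 / ((d:ℝ) - 1)) * ∑ i ∈ restIdx d, f (x i)|} ≤
        ENNReal.ofReal
          (Real.exp (-(t ^ 2 * (a d) ^ 2) / (3 * rhoE ρ fun x => f x ^ 2))) := by
  set μ : Measure ℝ := volume.withDensity fun x => ENNReal.ofReal (ρ x) with hμ
  have hρint : Integrable ρ := by
    by_contra h
    rw [integral_undef h] at hint
    exact zero_ne_one hint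
  have : IsProbabilityMeasure μ := ⟨by
    rw [hμ, withDensity_apply _ MeasurableSet.univ, Measure.restrict_univ,
      ← ofReal_integral_eq_lintegral_ofReal hρint (ae_of_all _ fun x => (hpos x).le), hint,
      ENNReal.ofReal_one]⟩
  have hE : ∀ g : ℝ → ℝ, ∫ x, g x ∂μ = rhoE ρ g := by
    intro g
    rw [hμ, integral_withDensity_eq_integral_toReal_smul hmeas.ennreal_ofReal
      (ae_of_all _ fun _ => ENNReal.ofReal_lt_top)]
    simp only [rhoE, smul_eq_mul, ENNReal.toReal_ofReal (hpos _).le, mul_comm]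
  have hi : ∀ m : ℕ, Integrable (fun x => f x ^ m) μ := by
    intro m
    rw [hμ, integrable_withDensity_iff hmeas.ennreal_ofReal
      (ae_of_all _ fun _ => ENNReal.ofReal_lt_top)]
    simpa only [ENNReal.toReal_ofReal (hpos _).le] using
      integrable_pow_mul hmeas hpos hlog htail hf m
  have hm : Measurable f := hf.1.continuous.measurable
  set v : ℝ := rhoE ρ fun x => f x ^ 2 with hv
  obtain ⟨K, hK, haK⟩ := ha.exists_sq_le
  -- `k = j + 2` with `j ≥ c`, where `t² a_d² / (3v) ≤ c log d`
  obtain ⟨j, hj⟩ := exists_nat_ge (t ^ 2 * K / (3 * v))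
  set m : ℝ := ∫ x, f x ^ (4 * (j + 2)) ∂μ with hmdef
  have hm0 : 0 ≤ m := integral_nonneg fun x => Even.pow_nonneg ⟨2 * (j + 2), by ring⟩ _
  have ev1 : ∀ᶠ d : ℕ in atTop, (30 : ℝ) ≤ d :=
    tendsto_natCast_atTop_atTop.eventually_ge_atTop _
  have ev2 : ∀ᶠ d : ℕ in atTop, 4 * m ≤ d :=
    tendsto_natCast_atTop_atTop.eventually_ge_atTop _
  have ev3 : ∀ᶠ d : ℕ in atTop, 12 * Real.log 4 ≤ t ^ 2 * a d ^ 2 / v := by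
    have h1 : Tendsto (fun d => a d ^ 2) atTop atTop :=
      (tendsto_pow_atTop two_ne_zero).comp ha.2.1
    have h2 : Tendsto (fun d => t ^ 2 / v * a d ^ 2) atTop atTop :=
      h1.const_mul_atTop (by positivity)
    filter_upwards [h2.eventually_ge_atTop (12 * Real.log 4)] with d hd
    rwa [mul_div_right_comm]
  have ev4 : ∀ᶠ d : ℕ in atTop,
      Real.log d ≤ v ^ 2 / (100 * t ^ 2 * K) * Real.sqrt d := by
    have hc : 0 < v ^ 2 / (100 * t ^ 2 * K) := by positivity
    have := tendsto_natCast_atTop_atTop.eventually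
      ((isLittleO_log_rpow_atTop (r := 1 / 2) (by norm_num)).bound hc)
    filter_upwards [this] with d hd
    rw [Real.norm_eq_abs, Real.norm_eq_abs, ← Real.sqrt_eq_rpow,
      abs_of_nonneg (Real.sqrt_nonneg _)] at hd
    exact (le_abs_self _).trans hd
  filter_upwards [ev1, ev2, ev3, ev4] with d hd30 hdm hA hdlog
  have hd2 : 2 ≤ d := by
    have : (2 : ℝ) ≤ d := by linarith
    exact_mod_cast this
  have hd0 : (0 : ℝ) < d := by linarith
  have had := ha.1 d
  have haK' := haK d hd2
  set q := Real.sqrt d with hq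
  have hq0 : 0 < q := Real.sqrt_pos.2 hd0
  have hqq : q ^ 2 = d := Real.sq_sqrt hd0.le
  set L := Real.sqrt q with hLdef
  have hL0 : 0 < L := Real.sqrt_pos.2 hq0
  have hLL : L ^ 2 = q := Real.sq_sqrt hq0.le
  set A := t ^ 2 * a d ^ 2 / v with hAdef
  set lam := t * a d / (v * q) with hlam
  set y := ((d : ℝ) - 1) * (t * a d / q) with hy
  have hlL : lam * L ≤ 1 / 10 := by
    apply le_of_sq_le_sq _ (by norm_num)
    have h1 : (lam * L) ^ 2 = t ^ 2 * a d ^ 2 / (v ^ 2 * q) := by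
      rw [mul_pow, hLL, hlam]; field_simp
    rw [h1, div_le_iff₀ (by positivity)]
    calc t ^ 2 * a d ^ 2 ≤ t ^ 2 * (K * (v ^ 2 / (100 * t ^ 2 * K) * q)) := by
          gcongr; exact haK'.trans (by gcongr)
      _ = (1 / 10) ^ 2 * (v ^ 2 * q) := by field_simp; norm_num
  have hA0 : 0 ≤ A := by positivity
  have hexp : -lam * y + d * (11 / 20 * lam ^ 2 * v) ≤ -(5 / 12 * A) := by
    have h1 : lam * y = A * (((d : ℝ) - 1) / d) := by
      rw [hlam, hy, hAdef, ← hqq]; field_simp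
    have h2 : d * (11 / 20 * lam ^ 2 * v) = 11 / 20 * A := by
      rw [hlam, hAdef, ← hqq]; field_simp
    have h3 : (29 : ℝ) / 30 ≤ ((d : ℝ) - 1) / d := by
      rw [div_le_div_iff₀ (by norm_num) hd0]; linarith
    rw [neg_mul, h1, h2]
    nlinarith [mul_le_mul_of_nonneg_left h3 hA0]
  have hmain : Real.exp (-(5 / 12 * A)) ≤ 1 / 4 * Real.exp (-(A / 3)) := by
    have : (1 / 4 : ℝ) = Real.exp (-Real.log 4) := by
      rw [Real.exp_neg, Real.exp_log (by norm_num)]; norm_num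
    rw [this, ← Real.exp_add]
    apply Real.exp_le_exp.2
    linarith
  have htl : d * (m / L ^ (4 * (j + 2))) ≤ 1 / 4 * Real.exp (-(A / 3)) := by
    have h1 : L ^ (4 * (j + 2)) = d * (d * (d : ℝ) ^ j) := by
      rw [pow_mul, show L ^ 4 = d by rw [← hqq, ← hLL]; ring]; ring
    have hlogd : 0 ≤ Real.log d := Real.log_nonneg (by linarith)
    have h2 : Real.exp (A / 3) ≤ (d : ℝ) ^ j := by
      rw [← Real.exp_log (pow_pos hd0 j), Real.log_pow]
      apply Real.exp_le_exp.2
      calc A / 3 = t ^ 2 / (3 * v) * a d ^ 2 := by rw [hAdef]; field_simp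
        _ ≤ t ^ 2 / (3 * v) * (K * Real.log d) := by gcongr
        _ = t ^ 2 * K / (3 * v) * Real.log d := by ring
        _ ≤ _ := by gcongr
    rw [h1, Real.exp_neg]
    calc d * (m / (d * (d * (d : ℝ) ^ j))) = m / d * ((d : ℝ) ^ j)⁻¹ := by field_simp
      _ ≤ 1 / 4 * (Real.exp (A / 3))⁻¹ := by
        have h3 : m / d ≤ 1 / 4 := by rw [div_le_iff₀ hd0]; linarith
        gcongr
  have hset : {x : Fin d → ℝ | t * a d / q ≤ |(1 / ((d:ℝ) - 1)) * ∑ i ∈ restIdx d, f (x i)|} =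
      {x | y ≤ |∑ i ∈ restIdx d, f (x i)|} := by
    ext x
    have hd1 : (0 : ℝ) < d - 1 := by linarith
    simp only [mem_ofPred_eq]
    rw [abs_mul, abs_of_pos (by positivity), one_div, le_inv_mul_iff₀ hd1]
  have hb := two_sided_bound hm hi ((hE f).trans hf0) hL0
    (by positivity : 0 ≤ lam) hlL d (restIdx d) y (j + 2)
  rw [hE fun x => f x ^ 2, ← hv, ← hmdef] at hb
  have hfin := hb.trans (add_le_add
    (mul_le_mul_of_nonneg_left ((Real.exp_le_exp.2 hexp).trans hmain) zero_le_two) htl)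
  rw [hset, pm, ← hμ, ENNReal.le_ofReal_iff_toReal_le (measure_ne_top _ _) (Real.exp_pos _).le]
  refine hfin.trans ?_
  have he : -(t ^ 2 * a d ^ 2) / (3 * v) = -(A / 3) := by rw [hAdef]; field_simp
  rw [he]
  linarith [Real.exp_pos (-(A / 3))]
end
end

section
/- Let X₁, X₂, …, X_d be independent real random variables, each X_i having a bounded density q_i. Then the density Q_d of the sum Σ_{i=1}^d X_i satisfies ‖Q_d‖_∞ ≤ c·max_{i≤d} ‖q_i‖_∞/√d, where c > 0 is a universal constant (independent of d and of the q_i). -/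
/-!
The proof avoids characteristic functions and instead runs a logistic flow through the sum.

Let `σ` be the sigmoid, `g = σ'` the logistic density and `P` the law of `n` independent logistic
variables `y i`. Let `M` be a common bound for the densities. Composing `σ` with the quantile
function of `X i` writes `X i = f i (y i)` with `f i` monotone and
`σ z - σ y ≤ M * (f i z - f i y)` for `y ≤ z` (`exists_quantile_coupling`).
Write `S y = ∑ f i (y i)` and `W y = ∑ g (y i)`, and let `B` be a Borel set.

Move all coordinates simultaneously, `y ↦ y + t`.

* Along each orbit, `∑ σ (y i + t)` is an `M`-Lipschitz function of `S (y + t)`, and its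
  `t`-derivative is `W (y + t)`. Hence `∫ 1_B (S (y + t)) W (y + t) dt ≤ M |B|`
  (`lintegral_time_le`).
* Since `g (y + t) g (y - t) ≥ exp (-t ^ 2) g y ^ 2`, averaging the shifts by `t` and `-t` costs only
  a factor `exp (-n t ^ 2 / 2)`, so over the time window `|t| ≤ 1 / √n` the law `P` is
  quasi-invariant up to a constant (`mul_lintegral_le_lintegral_shift`).

Together these give `E[1_B (S) W] ≤ √n M |B|`. Typically `W` has order `n`; the weight is removed
by `1 ≤ 24 W / n + exp (n / 24 - W)`. The second term is handled by integrating first in one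
coordinate, which yields the factor `M |B|`, and by the exponential smallness of the Laplace
transform of `W` in the remaining ones (`lintegral_exp_le`). This gives
`P (S ∈ B) ≤ 72 M |B| / √n` for every Borel set `B` (`map_sum_pi_le`), and the Radon-Nikodym
derivative of the law of the sum is then bounded by the same constant.
-/

open MeasureTheory Filter Set

noncomputable section

/-! ### The logistic distribution -/

/-- The density of the logistic distribution, written as the derivative `σ (1 - σ)` of the
sigmoid. -/
def logisticDensity (y : ℝ) : ℝ := Real.sigmoid y * (1 - Real.sigmoid y)

/-- The logistic distribution, whose distribution function is the sigmoid. -/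
def logisticMeasure : Measure ℝ :=
  volume.withDensity fun y => ENNReal.ofReal (logisticDensity y)

lemma logisticDensity_pos (y : ℝ) : 0 < logisticDensity y :=
  mul_pos (Real.sigmoid_pos y) (sub_pos.2 (Real.sigmoid_lt_one y))

lemma logisticDensity_le_one (y : ℝ) : logisticDensity y ≤ 1 := by
  have h0 := Real.sigmoid_pos y
  have h1 := Real.sigmoid_lt_one y
  unfold logisticDensity
  nlinarith

lemma measurable_sigmoid : Measurable Real.sigmoid := continuous_sigmoid.measurable

@[fun_prop]
lemma measurable_logisticDensity : Measurable logisticDensity :=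
  measurable_sigmoid.mul (measurable_const.sub measurable_sigmoid)

/-- The sigmoid, being the distribution function, pushes the logistic law to the uniform one on
`(0, 1)`. -/
lemma logisticMeasure_map_sigmoid :
    logisticMeasure.map Real.sigmoid = volume.restrict (Ioo 0 1) := by
  ext C hC
  have hC' : MeasurableSet (Real.sigmoid ⁻¹' C) := measurable_sigmoid hC
  rw [Measure.map_apply measurable_sigmoid hC, Measure.restrict_apply hC, logisticMeasure,
    withDensity_apply _ hC', ← Real.range_sigmoid, ← image_preimage_eq_inter_range,
    ← setLIntegral_one, lintegral_image_eq_lintegral_abs_deriv_mul hC'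
      (fun x _ => (Real.hasDerivAt_sigmoid x).hasDerivWithinAt) Real.sigmoid_injective.injOn]
  refine lintegral_congr fun y => ?_
  rw [mul_one, ← logisticDensity, abs_of_pos (logisticDensity_pos y)]

instance : IsProbabilityMeasure logisticMeasure := by
  have h : logisticMeasure.map Real.sigmoid univ = 1 := by
    simp [logisticMeasure_map_sigmoid]
  rw [Measure.map_apply measurable_sigmoid .univ, preimage_univ] at h
  exact ⟨h⟩

lemma exp_neg_le_one_sub_half {x : ℝ} (h0 : 0 ≤ x) (h1 : x ≤ 1) : Real.exp (-x) ≤ 1 - x / 2 := by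
  have h : Real.exp (-x) ≤ 1 / (1 + x) := by
    rw [Real.exp_neg, ← one_div]
    exact one_div_le_one_div_of_le (by linarith) (by linarith [Real.add_one_le_exp x])
  refine h.trans ?_
  rw [div_le_iff₀ (by linarith)]
  nlinarith

/-- Since `exp (-x) ≤ 1 - x / 2` on `[0, 1]` and the logistic density has logistic mean
`∫ u (1 - u) du = 1 / 6`, the left side is at most `11 / 12 ≤ exp (-1 / 12)`. -/
lemma lintegral_exp_neg_logisticDensity_le :
    ∫⁻ y, ENNReal.ofReal (Real.exp (-logisticDensity y)) ∂logisticMeasure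
      ≤ ENNReal.ofReal (Real.exp (-(1 / 12))) := by
  have hm : Measurable fun u : ℝ => ENNReal.ofReal (1 - u * (1 - u) / 2) := by fun_prop
  calc
    _ ≤ ∫⁻ y, ENNReal.ofReal (1 - Real.sigmoid y * (1 - Real.sigmoid y) / 2) ∂logisticMeasure :=
      lintegral_mono fun y => ENNReal.ofReal_le_ofReal
        (exp_neg_le_one_sub_half (logisticDensity_pos y).le (logisticDensity_le_one y))
    _ = ∫⁻ u in Ioo (0 : ℝ) 1, ENNReal.ofReal (1 - u * (1 - u) / 2) := by
      rw [← logisticMeasure_map_sigmoid, lintegral_map hm measurable_sigmoid]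
    _ = ENNReal.ofReal (∫ u in Ioo (0 : ℝ) 1, (1 - u * (1 - u) / 2)) := by
      rw [ofReal_integral_eq_lintegral_ofReal]
      · exact ((by fun_prop : Continuous fun u : ℝ => 1 - u * (1 - u) / 2).integrableOn_Icc
          (a := 0) (b := 1)).mono_set Ioo_subset_Icc_self
      · filter_upwards [ae_restrict_mem measurableSet_Ioo] with u hu
        have h0 := hu.1
        have h1 := hu.2
        simp only [Pi.zero_apply]
        nlinarith
    _ ≤ _ := by
      apply ENNReal.ofReal_le_ofReal
      rw [← integral_Ioc_eq_integral_Ioo, ← intervalIntegral.integral_of_le zero_le_one]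
      have h : ∫ u in (0 : ℝ)..1, (1 - u * (1 - u) / 2) = 11 / 12 := by
        have := intervalIntegral.integral_eq_sub_of_hasDerivAt (a := (0 : ℝ)) (b := 1)
          (f := fun u => u - u ^ 2 / 4 + u ^ 3 / 6) (f' := fun u => 1 - u * (1 - u) / 2)
          (fun u _ => by
            convert (((hasDerivAt_id' u).fun_sub (((hasDerivAt_id' u).fun_pow 2).div_const 4)).fun_add
              (((hasDerivAt_id' u).fun_pow 3).div_const 6)) using 1
            norm_num; ring)
          ((by fun_prop : Continuous fun u : ℝ => 1 - u * (1 - u) / 2).intervalIntegrable _ _)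
        rw [this]; norm_num
      rw [h]
      linarith [Real.add_one_le_exp (-(1 / 12) : ℝ)]

/-- The logistic density is not too log-concave: the second difference of its logarithm is at
least `-t ^ 2`. This reduces to `cosh t ≤ exp (t ^ 2 / 2)`. -/
lemma logisticDensity_mul_ge (y t : ℝ) :
    Real.exp (-t ^ 2) * logisticDensity y ^ 2 ≤ logisticDensity (y + t) * logisticDensity (y - t) := by
  have hg : ∀ x, logisticDensity x = Real.exp (-x) / (1 + Real.exp (-x)) ^ 2 := by
    intro x
    have := Real.exp_pos (-x)
    rw [logisticDensity, Real.sigmoid_def]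
    field_simp
    ring
  have hc : (Real.exp t + Real.exp (-t)) ≤ 2 * Real.exp (t ^ 2 / 2) := by
    have := Real.cosh_le_exp_half_sq t
    rw [Real.cosh_eq] at this
    linarith
  have h1 : 1 ≤ Real.exp (t ^ 2 / 2) := Real.one_le_exp (by positivity)
  have hE : Real.exp (-t ^ 2) = 1 / Real.exp (t ^ 2 / 2) ^ 2 := by
    rw [← Real.exp_nat_mul, one_div, ← Real.exp_neg]; congr 1; push_cast; ring
  rw [hg, hg, hg, hE, show -(y + t) = -y + -t by ring, show -(y - t) = -y + t by ring,
    Real.exp_add, Real.exp_add]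
  have hp : Real.exp t * Real.exp (-t) = 1 := by rw [← Real.exp_add]; simp
  have ha := Real.exp_pos t
  have hb := Real.exp_pos (-t)
  have hw := Real.exp_pos (-y)
  set a := Real.exp t
  set b := Real.exp (-t)
  set w := Real.exp (-y)
  set K := Real.exp (t ^ 2 / 2)
  have key : (1 + w * b) * (1 + w * a) ≤ K * (1 + w) ^ 2 := by
    have : (1 + w * b) * (1 + w * a) = 1 + w ^ 2 + w * (a + b) := by
      linear_combination w ^ 2 * hp
    rw [this]
    nlinarith [mul_le_mul_of_nonneg_left hc hw.le, sq_nonneg w]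
  have e1 : w * b / (1 + w * b) ^ 2 * (w * a / (1 + w * a) ^ 2)
      = w ^ 2 / ((1 + w * b) * (1 + w * a)) ^ 2 := by
    rw [div_mul_div_comm, mul_pow]; congr 1; linear_combination w ^ 2 * hp
  have e2 : 1 / K ^ 2 * (w / (1 + w) ^ 2) ^ 2 = w ^ 2 / (K * (1 + w) ^ 2) ^ 2 := by
    field_simp
  rw [e1, e2]
  gcongr

/-! ### Quantile coupling -/

/-- A law with density at most `M` is the image of the logistic law under a monotone map `f`. One
takes for `f y` any solution `x` of `cdf μ x = σ y`; the cdf is `M`-Lipschitz, which gives the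
expansion estimate. -/
lemma exists_quantile_coupling (μ : Measure ℝ) [IsProbabilityMeasure μ] {M : ℝ} (hM : 0 ≤ M)
    (h : ∀ B, μ B ≤ ENNReal.ofReal M * volume B) :
    ∃ f : ℝ → ℝ, Monotone f ∧ logisticMeasure.map f = μ ∧
      ∀ y z, y ≤ z → Real.sigmoid z - Real.sigmoid y ≤ M * (f z - f y) := by
  have hinc : ∀ a b : ℝ, a ≤ b → ProbabilityTheory.cdf μ b - ProbabilityTheory.cdf μ a
      ≤ M * (b - a) := by
    intro a b hab
    rw [ProbabilityTheory.cdf_eq_real, ProbabilityTheory.cdf_eq_real,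
      ← measureReal_sdiff (Iic_subset_Iic.2 hab) measurableSet_Iic, Iic_sdiff_Iic]
    refine ENNReal.toReal_le_of_le_ofReal (mul_nonneg hM (by linarith)) ?_
    refine (h _).trans ?_
    rw [Real.volume_Ioc, ENNReal.ofReal_mul hM]
  have hcont : Continuous (ProbabilityTheory.cdf μ) := by
    refine (LipschitzWith.of_le_add_mul M.toNNReal fun a b => ?_).continuous
    rw [Real.coe_toNNReal _ hM, Real.dist_eq]
    rcases le_total a b with hab | hab
    · have := ProbabilityTheory.monotone_cdf μ hab
      have := mul_nonneg hM (abs_nonneg (a - b))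
      linarith
    · have := hinc b a hab
      rw [abs_of_nonneg (by linarith)]
      linarith
  have hex : ∀ y, ∃ x, ProbabilityTheory.cdf μ x = Real.sigmoid y := by
    intro y
    exact mem_range_of_exists_le_of_exists_ge hcont
      (((ProbabilityTheory.tendsto_cdf_atBot μ).eventually_lt_const (Real.sigmoid_pos y)).exists.imp
        fun _ h => h.le)
      (((ProbabilityTheory.tendsto_cdf_atTop μ).eventually_const_lt
        (Real.sigmoid_lt_one y)).exists.imp fun _ h => h.le)
  choose f hf using hex
  have hmono : Monotone f := by
    intro y z hyz
    rcases hyz.eq_or_lt with rfl | hyz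
    · exact le_rfl
    by_contra! hlt
    have := ProbabilityTheory.monotone_cdf μ hlt.le
    rw [hf, hf] at this
    exact absurd (Real.sigmoid_strictMono hyz) (not_lt.2 this)
  refine ⟨f, hmono, ?_, fun y z hyz => ?_⟩
  · have : IsProbabilityMeasure (logisticMeasure.map f) :=
      Measure.isProbabilityMeasure_map hmono.measurable.aemeasurable
    refine Measure.eq_of_cdf _ _ (StieltjesFunction.ext fun x => ?_)
    set p := ProbabilityTheory.cdf μ x with hp
    have hp0 : 0 ≤ p := ProbabilityTheory.cdf_nonneg μ x
    have hp1 : p ≤ 1 := ProbabilityTheory.cdf_le_one μ x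
    have hlo : ENNReal.ofReal p ≤ logisticMeasure.map f (Iic x) := by
      calc ENNReal.ofReal p = (volume.restrict (Ioo 0 1)) (Iio p) := by
            rw [Measure.restrict_apply measurableSet_Iio, Iio_inter_Ioo, min_eq_left hp1,
              Real.volume_Ioo, sub_zero]
        _ = logisticMeasure (Real.sigmoid ⁻¹' Iio p) := by
            rw [← logisticMeasure_map_sigmoid, Measure.map_apply measurable_sigmoid
              measurableSet_Iio]
        _ ≤ logisticMeasure (f ⁻¹' Iic x) := by
            refine measure_mono fun y hy => ?_
            by_contra hlt
            have h1 := ProbabilityTheory.monotone_cdf μ (not_le.1 hlt).le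
            rw [hf] at h1
            exact absurd hy (not_lt.2 h1)
        _ = _ := (Measure.map_apply hmono.measurable measurableSet_Iic).symm
    have hhi : logisticMeasure.map f (Iic x) ≤ ENNReal.ofReal p := by
      calc logisticMeasure.map f (Iic x) = logisticMeasure (f ⁻¹' Iic x) :=
            Measure.map_apply hmono.measurable measurableSet_Iic
        _ ≤ logisticMeasure (Real.sigmoid ⁻¹' Iic p) := by
            refine measure_mono fun y hy => ?_
            have h1 := ProbabilityTheory.monotone_cdf μ (show f y ≤ x from hy)
            rw [hf] at h1
            exact h1
        _ = (volume.restrict (Ioo 0 1)) (Iic p) := by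
            rw [← logisticMeasure_map_sigmoid, Measure.map_apply measurable_sigmoid
              measurableSet_Iic]
        _ ≤ volume (Ioc 0 p) := by
            rw [Measure.restrict_apply measurableSet_Iic]
            exact measure_mono fun u hu => ⟨hu.2.1, hu.1⟩
        _ = ENNReal.ofReal p := by rw [Real.volume_Ioc, sub_zero]
    rw [ProbabilityTheory.cdf_eq_real, measureReal_def, le_antisymm hhi hlo,
      ENNReal.toReal_ofReal hp0]
  · rw [← hf, ← hf]
    exact hinc _ _ (hmono hyz)

/-! ### Integration on finite products -/

lemma lintegral_pi_succ {n : ℕ} (μ : Fin (n + 1) → Measure ℝ) [∀ i, SigmaFinite (μ i)]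
    (F : (Fin (n + 1) → ℝ) → ENNReal) :
    ∫⁻ y, F y ∂(Measure.pi μ) =
      ∫⁻ p, F (Fin.cons p.1 p.2) ∂((μ 0).prod (Measure.pi fun j : Fin n => μ j.succ)) := by
  rw [← (measurePreserving_piFinSuccAbove μ 0).symm.lintegral_comp_emb
    (MeasurableEquiv.measurableEmbedding _)]
  simp only [MeasurableEquiv.piFinSuccAbove_symm_apply, Fin.insertNthEquiv, Fin.insertNth_zero,
    Fin.zero_succAbove]
  rfl

lemma lintegral_pi_prod {n : ℕ} (μ : Fin n → Measure ℝ) [∀ i, SigmaFinite (μ i)]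
    (f : Fin n → ℝ → ENNReal) (hf : ∀ i, Measurable (f i)) :
    ∫⁻ y, ∏ i, f i (y i) ∂(Measure.pi μ) = ∏ i, ∫⁻ x, f i x ∂(μ i) := by
  induction n with
  | zero => simp
  | succ n ih =>
    rw [lintegral_pi_succ]
    simp_rw [Fin.prod_univ_succ, Fin.cons_zero, Fin.cons_succ]
    rw [lintegral_prod_mul (g := fun z : Fin n → ℝ => ∏ i, f i.succ (z i)) (hf 0).aemeasurable,
      ih _ _ fun i => hf i.succ]
    exact (Finset.measurable_prod _ fun i _ =>
      (hf i.succ).comp (measurable_pi_apply i)).aemeasurable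

lemma pi_logisticMeasure (n : ℕ) : Measure.pi (fun _ : Fin n => logisticMeasure) =
    volume.withDensity fun y : Fin n → ℝ => ENNReal.ofReal (∏ i, logisticDensity (y i)) := by
  refine Measure.pi_eq fun s hs => ?_
  rw [withDensity_apply _ (MeasurableSet.univ_pi hs), volume_pi, Measure.restrict_pi_pi]
  simp_rw [ENNReal.ofReal_prod_of_nonneg fun i _ => (logisticDensity_pos _).le]
  rw [lintegral_pi_prod _ (fun _ x => ENNReal.ofReal (logisticDensity x)) fun _ => by fun_prop]
  exact Finset.prod_congr rfl fun i _ => (withDensity_apply _ (hs i)).symm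

/-! ### Quasi-invariance under diagonal shifts -/

/-- The two-sided average of the shifted product density controls the density itself, by the
inequality of arithmetic and geometric means and `logisticDensity_mul_ge`. -/
lemma prod_logisticDensity_add_ge {n : ℕ} (y : Fin n → ℝ) {t τ : ℝ} (ht : |t| ≤ τ) :
    2 * Real.exp (-(n * τ ^ 2 / 2)) * ∏ i, logisticDensity (y i) ≤
      ∏ i, logisticDensity (y i - t) + ∏ i, logisticDensity (y i + t) := by
  have hpos : ∀ z : Fin n → ℝ, 0 < ∏ i, logisticDensity (z i) :=
    fun z => Finset.prod_pos fun i _ => logisticDensity_pos _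
  have ha := hpos fun i => y i - t
  have hb := hpos fun i => y i + t
  have hc := hpos y
  have hsq : t ^ 2 ≤ τ ^ 2 := sq_le_sq' (abs_le.1 ht).1 (abs_le.1 ht).2
  have hmul : (Real.exp (-(n * τ ^ 2 / 2)) * ∏ i, logisticDensity (y i)) ^ 2 ≤
      (∏ i, logisticDensity (y i + t)) * ∏ i, logisticDensity (y i - t) := by
    calc _ ≤ (Real.exp (-(n * t ^ 2 / 2)) * ∏ i, logisticDensity (y i)) ^ 2 := by
          gcongr
      _ = ∏ i, (Real.exp (-t ^ 2) * logisticDensity (y i) ^ 2) := by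
          rw [Finset.prod_mul_distrib, Finset.prod_pow, Finset.prod_const, Finset.card_univ,
            Fintype.card_fin, mul_pow, ← Real.exp_nat_mul, ← Real.exp_nat_mul]
          congr 2
          push_cast
          ring
      _ ≤ ∏ i, (logisticDensity (y i + t) * logisticDensity (y i - t)) :=
          Finset.prod_le_prod (fun i _ => by positivity) fun i _ => logisticDensity_mul_ge _ _
      _ = _ := Finset.prod_mul_distrib
  rw [mul_assoc]
  set a := ∏ i, logisticDensity (y i - t)
  set b := ∏ i, logisticDensity (y i + t)
  refine le_of_pow_le_pow_left₀ two_ne_zero (by positivity) ?_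
  nlinarith [sq_nonneg (a - b)]

lemma ofReal_prod_le_setLIntegral {n : ℕ} (y : Fin n → ℝ) {τ : ℝ} (hτ : 0 ≤ τ) :
    ENNReal.ofReal (2 * τ * Real.exp (-(n * τ ^ 2 / 2)) * ∏ i, logisticDensity (y i)) ≤
      ∫⁻ t in Icc (-τ) τ, ENNReal.ofReal (∏ i, logisticDensity (y i - t)) := by
  have hcd : Continuous logisticDensity :=
    continuous_sigmoid.mul (continuous_const.sub continuous_sigmoid)
  have hc1 : Continuous fun t => ∏ i, logisticDensity (y i - t) := by fun_prop
  have hc2 : Continuous fun t => ∏ i, logisticDensity (y i + t) := by fun_prop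
  rw [← ofReal_integral_eq_lintegral_ofReal hc1.integrableOn_Icc
    (Eventually.of_forall fun t => Finset.prod_nonneg fun i _ => (logisticDensity_pos _).le),
    integral_Icc_eq_integral_Ioc, ← intervalIntegral.integral_of_le (by linarith)]
  apply ENNReal.ofReal_le_ofReal
  have hsymm : ∫ t in (-τ)..τ, ∏ i, logisticDensity (y i + t) =
      ∫ t in (-τ)..τ, ∏ i, logisticDensity (y i - t) := by
    have := intervalIntegral.integral_comp_neg (a := -τ) (b := τ)
      fun t => ∏ i, logisticDensity (y i - t)
    simpa using this
  have hmono := intervalIntegral.integral_mono_on (μ := volume) (a := -τ) (b := τ) (by linarith)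
    intervalIntegrable_const ((hc1.add hc2).intervalIntegrable _ _)
    fun t ht => prod_logisticDensity_add_ge y (abs_le.2 ht)
  simp only [Pi.add_apply] at hmono
  rw [intervalIntegral.integral_add (hc1.intervalIntegrable _ _) (hc2.intervalIntegrable _ _),
    hsymm, intervalIntegral.integral_const, smul_eq_mul] at hmono
  linarith

/-- Quasi-invariance of the logistic product law under diagonal shifts, averaged over a symmetric
time window. For `τ` of order `1 / √n` the exponential factor is bounded below. -/
lemma mul_lintegral_le_lintegral_shift {n : ℕ} (F : (Fin n → ℝ) → ENNReal) (hF : Measurable F)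
    {τ : ℝ} (hτ : 0 ≤ τ) :
    ENNReal.ofReal (2 * τ * Real.exp (-(n * τ ^ 2 / 2))) *
        ∫⁻ y, F y ∂(Measure.pi fun _ : Fin n => logisticMeasure) ≤
      ∫⁻ t in Icc (-τ) τ, ∫⁻ y, F (fun i => y i + t)
        ∂(Measure.pi fun _ : Fin n => logisticMeasure) := by
  have hG : Measurable fun y : Fin n → ℝ => ENNReal.ofReal (∏ i, logisticDensity (y i)) := by
    fun_prop
  have hshift : ∀ t : ℝ, ∫⁻ y, F (fun i => y i + t)
        ∂(Measure.pi fun _ : Fin n => logisticMeasure) =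
      ∫⁻ y : Fin n → ℝ, ENNReal.ofReal (∏ i, logisticDensity (y i - t)) * F y := by
    intro t
    have hFt : Measurable fun y : Fin n → ℝ => F (fun i => y i + t) := by fun_prop
    rw [pi_logisticMeasure, lintegral_withDensity_eq_lintegral_mul _ hG hFt,
      ← lintegral_sub_right_eq_self _ (fun _ => t : Fin n → ℝ)]
    simp [Pi.mul_apply]
  simp_rw [hshift]
  rw [lintegral_lintegral_swap (by fun_prop), pi_logisticMeasure,
    lintegral_withDensity_eq_lintegral_mul _ hG hF, ← lintegral_const_mul _ (hG.mul hF)]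
  refine lintegral_mono fun y => ?_
  dsimp only
  rw [lintegral_mul_const _ (by fun_prop), Pi.mul_apply, ← mul_assoc,
    ← ENNReal.ofReal_mul (by positivity)]
  gcongr
  exact ofReal_prod_le_setLIntegral y hτ

/-! ### The two estimates -/

/-- The weighted time an orbit of the diagonal flow spends with its sum in `B`. With
`ψ t = ∑ f i (y i + t)` and `θ t = ∑ σ (y i + t)`, the weight is `θ'`, so the integral is the measure
of `θ (ψ⁻¹ B)`; as `θ` is an `M`-Lipschitz function of `ψ`, this is at most `M |B|`. -/
lemma lintegral_time_le {n : ℕ} (hn : 0 < n) {M : ℝ} (f : Fin n → ℝ → ℝ)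
    (hmono : ∀ i, Monotone (f i))
    (hexp : ∀ i y z, y ≤ z → Real.sigmoid z - Real.sigmoid y ≤ M * (f i z - f i y))
    (hM : 0 ≤ M) {B : Set ℝ} (hB : MeasurableSet B) (y : Fin n → ℝ) :
    ∫⁻ t, B.indicator 1 (∑ i, f i (y i + t)) *
        ENNReal.ofReal (∑ i, logisticDensity (y i + t)) ≤ ENNReal.ofReal M * volume B := by
  have : Nonempty (Fin n) := ⟨⟨0, hn⟩⟩
  set ψ : ℝ → ℝ := fun t => ∑ i, f i (y i + t) with hψ
  set θ : ℝ → ℝ := fun t => ∑ i, Real.sigmoid (y i + t) with hθ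
  have hψmono : Monotone ψ := fun s t hst =>
    Finset.sum_le_sum fun i _ => hmono i (by linarith)
  have hθmono : StrictMono θ := fun s t hst =>
    Finset.sum_lt_sum_of_nonempty Finset.univ_nonempty fun i _ =>
      Real.sigmoid_strictMono (by linarith)
  have hinc : ∀ s t, s ≤ t → θ t - θ s ≤ M * (ψ t - ψ s) := fun s t hst => by
    simp only [hψ, hθ, ← Finset.sum_sub_distrib, Finset.mul_sum]
    exact Finset.sum_le_sum fun i _ => hexp i _ _ (by linarith)
  have hψinj : Function.Injective ψ := by
    have key : ∀ s t, s < t → ψ s ≠ ψ t := fun s t hst h => by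
      have h1 := hinc s t hst.le
      have h2 := hθmono hst
      rw [h, sub_self, mul_zero] at h1
      linarith
    intro s t h
    rcases lt_trichotomy s t with hst | hst | hst
    · exact absurd h (key s t hst)
    · exact hst
    · exact absurd h.symm (key t s hst)
  have hT : MeasurableSet (ψ ⁻¹' B) := hψmono.measurable hB
  have hderiv : ∀ t, HasDerivAt θ (∑ i, logisticDensity (y i + t)) t := fun t =>
    HasDerivAt.fun_sum fun i _ => (Real.hasDerivAt_sigmoid (y i + t)).comp_const_add (y i) t
  have hleft : Function.LeftInverse (Function.invFun ψ) ψ := Function.leftInverse_invFun hψinj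
  have hlip : LipschitzOnWith M.toNNReal (θ ∘ Function.invFun ψ) (ψ '' (ψ ⁻¹' B)) := by
    refine LipschitzOnWith.of_le_add_mul _ ?_
    rintro _ ⟨s, -, rfl⟩ _ ⟨t, -, rfl⟩
    simp only [Function.comp_apply, hleft s, hleft t]
    rw [Real.coe_toNNReal _ hM, Real.dist_eq]
    rcases le_total s t with hst | hst
    · have := hθmono.monotone hst
      have := mul_nonneg hM (abs_nonneg (ψ s - ψ t))
      linarith
    · have := hinc t s hst
      rw [abs_of_nonneg (sub_nonneg.2 (hψmono hst))]
      linarith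
  have himg : (θ ∘ Function.invFun ψ) '' (ψ '' (ψ ⁻¹' B)) = θ '' (ψ ⁻¹' B) := by
    rw [image_image]
    exact image_congr fun t _ => by simp [hleft t]
  calc _ = ∫⁻ t in ψ ⁻¹' B, ENNReal.ofReal |∑ i, logisticDensity (y i + t)| := by
        rw [← lintegral_indicator hT]
        refine lintegral_congr fun t => ?_
        by_cases ht : ψ t ∈ B
        · rw [indicator_of_mem ht, indicator_of_mem (show t ∈ ψ ⁻¹' B from ht), Pi.one_apply,
            one_mul, abs_of_nonneg (Finset.sum_nonneg fun i _ => (logisticDensity_pos _).le)]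
        · rw [indicator_of_notMem ht, indicator_of_notMem (show t ∉ ψ ⁻¹' B from ht), zero_mul]
    _ = volume (θ '' (ψ ⁻¹' B)) := by
        rw [← setLIntegral_one, lintegral_image_eq_lintegral_abs_deriv_mul hT
          (fun t _ => (hderiv t).hasDerivWithinAt) hθmono.injective.injOn]
        simp
    _ ≤ ENNReal.ofReal M * volume (ψ '' (ψ ⁻¹' B)) := by
        have := hlip.hausdorffMeasure_image_le (d := 1) zero_le_one
        rwa [himg, hausdorffMeasure_real, ENNReal.rpow_one] at this
    _ ≤ _ := by
        gcongr
        exact image_preimage_subset _ _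

/-- Integrating first in the coordinate `0` gives the factor `M |B|`; the other `n` coordinates each
contribute a factor at most `exp (-1 / 12)`. -/
lemma lintegral_exp_le {n : ℕ} {M : ℝ} (f : Fin (n + 1) → ℝ → ℝ) (hf : ∀ i, Measurable (f i))
    (h0 : ∀ B, logisticMeasure.map (f 0) B ≤ ENNReal.ofReal M * volume B)
    {B : Set ℝ} (hB : MeasurableSet B) :
    ∫⁻ y, B.indicator 1 (∑ i, f i (y i)) *
        ENNReal.ofReal (Real.exp (-∑ i, logisticDensity (y i)))
        ∂(Measure.pi fun _ : Fin (n + 1) => logisticMeasure) ≤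
      ENNReal.ofReal M * volume B * ENNReal.ofReal (Real.exp (-(n / 12))) := by
  have hind : Measurable (B.indicator (1 : ℝ → ENNReal)) := measurable_one.indicator hB
  have hE : Measurable fun x => ENNReal.ofReal (Real.exp (-logisticDensity x)) := by fun_prop
  rw [lintegral_pi_succ]
  simp_rw [Fin.sum_univ_succ, Fin.cons_zero, Fin.cons_succ]
  calc _ ≤ ∫⁻ p, B.indicator 1 (f 0 p.1 + ∑ i : Fin n, f i.succ (p.2 i)) *
          ∏ i, ENNReal.ofReal (Real.exp (-logisticDensity (p.2 i)))
          ∂(logisticMeasure.prod (Measure.pi fun _ : Fin n => logisticMeasure)) := by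
        refine lintegral_mono fun p => ?_
        dsimp only
        gcongr
        rw [← ENNReal.ofReal_prod_of_nonneg fun i _ => (Real.exp_pos _).le, ← Real.exp_sum,
          Finset.sum_neg_distrib]
        gcongr
        linarith [logisticDensity_pos p.1]
    _ = ∫⁻ z : Fin n → ℝ, (∫⁻ x, B.indicator 1 (f 0 x + ∑ i : Fin n, f i.succ (z i))
          ∂logisticMeasure) * ∏ i, ENNReal.ofReal (Real.exp (-logisticDensity (z i)))
          ∂(Measure.pi fun _ : Fin n => logisticMeasure) := by
        rw [lintegral_prod_symm _ (by fun_prop)]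
        refine lintegral_congr fun z => ?_
        dsimp only
        rw [lintegral_mul_const _ (by fun_prop)]
    _ ≤ ∫⁻ z : Fin n → ℝ, (ENNReal.ofReal M * volume B) *
          ∏ i, ENNReal.ofReal (Real.exp (-logisticDensity (z i)))
          ∂(Measure.pi fun _ : Fin n => logisticMeasure) := by
        refine lintegral_mono fun z => ?_
        dsimp only
        gcongr
        set r := ∑ i : Fin n, f i.succ (z i)
        calc _ = ∫⁻ x, ((· + r) ⁻¹' B).indicator 1 x ∂(logisticMeasure.map (f 0)) := by
              rw [lintegral_map (measurable_one.indicator (measurable_add_const r hB)) (hf 0)]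
              rfl
          _ = logisticMeasure.map (f 0) ((· + r) ⁻¹' B) :=
              lintegral_indicator_one (measurable_add_const r hB)
          _ ≤ ENNReal.ofReal M * volume ((· + r) ⁻¹' B) := h0 _
          _ = _ := by rw [measure_preimage_add_right]
    _ ≤ _ := by
        rw [lintegral_const_mul _ (by fun_prop), lintegral_pi_prod _ _ fun _ => hE]
        gcongr
        calc _ ≤ ∏ _i : Fin n, ENNReal.ofReal (Real.exp (-(1 / 12))) :=
              Finset.prod_le_prod' fun _ _ => lintegral_exp_neg_logisticDensity_le
          _ = _ := by
              rw [Finset.prod_const, Finset.card_univ, Fintype.card_fin,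
                ← ENNReal.ofReal_pow (Real.exp_pos _).le, ← Real.exp_nat_mul]
              congr 2
              ring

/-! ### The density of the sum -/

/-- The small ball bound for the sum of `n + 1` independent variables with densities at most `M`,
for an arbitrary Borel set `B`. -/
lemma map_sum_pi_le {n : ℕ} (μ : Fin (n + 1) → Measure ℝ) [∀ i, IsProbabilityMeasure (μ i)]
    {M : ℝ} (hM : 0 ≤ M) (h : ∀ i B, μ i B ≤ ENNReal.ofReal M * volume B)
    {B : Set ℝ} (hB : MeasurableSet B) :
    (Measure.pi μ).map (fun x => ∑ i, x i) B ≤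
      ENNReal.ofReal (72 * M / Real.sqrt (n + 1 : ℕ)) * volume B := by
  choose f hmono hmap hexp using fun i => exists_quantile_coupling (μ i) hM (h i)
  have hf : ∀ i, Measurable (f i) := fun i => (hmono i).measurable
  have hind : Measurable (B.indicator (1 : ℝ → ENNReal)) := measurable_one.indicator hB
  set P := Measure.pi fun _ : Fin (n + 1) => logisticMeasure with hP
  set s := Real.sqrt (n + 1 : ℕ) with hs
  have hs1 : 1 ≤ s := by
    rw [hs, Real.one_le_sqrt]
    push_cast
    linarith [(Nat.cast_nonneg n : (0 : ℝ) ≤ n)]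
  have hs2 : s ^ 2 = n + 1 := by
    rw [hs, Real.sq_sqrt (Nat.cast_nonneg _)]
    push_cast
    rfl
  have hs0 : 0 < s := by linarith
  have hpi : Measure.pi μ = P.map fun y i => f i (y i) := by
    have : ∀ i, SigmaFinite (logisticMeasure.map (f i)) := fun i => by
      rw [hmap i]; infer_instance
    rw [hP, Measure.pi_map_pi fun i => (hf i).aemeasurable]
    simp_rw [hmap]
  have hlhs : (Measure.pi μ).map (fun x => ∑ i, x i) B =
      ∫⁻ y, B.indicator 1 (∑ i, f i (y i)) ∂P := by
    rw [hpi, Measure.map_map (by fun_prop) (by fun_prop), ← lintegral_indicator_one hB,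
      lintegral_map hind (by fun_prop)]
    rfl
  have hmain : ∫⁻ y, B.indicator 1 (∑ i, f i (y i)) *
      ENNReal.ofReal (∑ i, logisticDensity (y i)) ∂P ≤
        ENNReal.ofReal s * (ENNReal.ofReal M * volume B) := by
    set X := ∫⁻ y, B.indicator 1 (∑ i, f i (y i)) *
      ENNReal.ofReal (∑ i, logisticDensity (y i)) ∂P with hX
    have hkey : ENNReal.ofReal s⁻¹ * X ≤ ENNReal.ofReal M * volume B := by
      have hshift := mul_lintegral_le_lintegral_shift
        (fun y : Fin (n + 1) → ℝ => B.indicator 1 (∑ i, f i (y i)) *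
          ENNReal.ofReal (∑ i, logisticDensity (y i))) (by fun_prop) (inv_nonneg.2 hs0.le)
      calc _ ≤ ENNReal.ofReal (2 * s⁻¹ * Real.exp (-((n + 1 : ℕ) * s⁻¹ ^ 2 / 2))) * X := by
            gcongr
            have h1 : ((n + 1 : ℕ) : ℝ) * s⁻¹ ^ 2 / 2 = 1 / 2 := by
              push_cast
              rw [← hs2]
              field_simp
            rw [h1]
            have h2 : 1 / 2 ≤ Real.exp (-(1 / 2)) := by
              linarith [Real.add_one_le_exp (-(1 / 2) : ℝ)]
            nlinarith [inv_pos.2 hs0]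
        _ ≤ _ := hshift
        _ = ∫⁻ y, (∫⁻ t in Icc (-s⁻¹) s⁻¹, B.indicator 1 (∑ i, f i (y i + t)) *
              ENNReal.ofReal (∑ i, logisticDensity (y i + t))) ∂P :=
            lintegral_lintegral_swap (by fun_prop)
        _ ≤ ∫⁻ _y, ENNReal.ofReal M * volume B ∂P :=
            lintegral_mono fun y => (setLIntegral_le_lintegral _ _).trans
              (lintegral_time_le n.succ_pos f hmono hexp hM hB y)
        _ = _ := by simp
    calc X = ENNReal.ofReal s * (ENNReal.ofReal s⁻¹ * X) := by
          rw [← mul_assoc, ← ENNReal.ofReal_mul hs0.le, mul_inv_cancel₀ hs0.ne',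
            ENNReal.ofReal_one, one_mul]
      _ ≤ _ := by gcongr
  -- removal of the weight `W`: one of the two terms is at least `1`, according to whether
  -- `W ≥ (n + 1) / 24`
  have hpt : ∀ W : ℝ, 0 ≤ W → (1 : ENNReal) ≤ ENNReal.ofReal (24 / s ^ 2) * ENNReal.ofReal W +
      ENNReal.ofReal (Real.exp (s ^ 2 / 24)) * ENNReal.ofReal (Real.exp (-W)) := by
    intro W hW
    rw [← ENNReal.ofReal_mul (by positivity), ← ENNReal.ofReal_mul (by positivity),
      ← ENNReal.ofReal_add (by positivity) (by positivity), ← Real.exp_add, ENNReal.one_le_ofReal]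
    rcases le_total (s ^ 2 / 24) W with hle | hle
    · have : 24 / s ^ 2 * (s ^ 2 / 24) ≤ 24 / s ^ 2 * W := by gcongr
      have h1 : 24 / s ^ 2 * (s ^ 2 / 24) = 1 := by field_simp
      linarith [Real.exp_pos (s ^ 2 / 24 + -W)]
    · have : 1 ≤ Real.exp (s ^ 2 / 24 + -W) := Real.one_le_exp (by linarith)
      have : 0 ≤ 24 / s ^ 2 * W := by positivity
      linarith
  rw [hlhs]
  calc _ ≤ ∫⁻ y, (ENNReal.ofReal (24 / s ^ 2) * (B.indicator 1 (∑ i, f i (y i)) *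
          ENNReal.ofReal (∑ i, logisticDensity (y i))) +
        ENNReal.ofReal (Real.exp (s ^ 2 / 24)) * (B.indicator 1 (∑ i, f i (y i)) *
          ENNReal.ofReal (Real.exp (-∑ i, logisticDensity (y i))))) ∂P := by
        refine lintegral_mono fun y => ?_
        dsimp only
        refine (mul_one _).symm.le.trans ((mul_le_mul' le_rfl (hpt (∑ i, logisticDensity (y i))
          (Finset.sum_nonneg fun i _ => (logisticDensity_pos _).le))).trans_eq ?_)
        ring
    _ ≤ ENNReal.ofReal (24 / s ^ 2) * (ENNReal.ofReal s * (ENNReal.ofReal M * volume B)) +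
        ENNReal.ofReal (Real.exp (s ^ 2 / 24)) *
          (ENNReal.ofReal M * volume B * ENNReal.ofReal (Real.exp (-(n / 12)))) := by
        rw [lintegral_add_left (by fun_prop), lintegral_const_mul _ (by fun_prop),
          lintegral_const_mul _ (by fun_prop)]
        gcongr
        exact lintegral_exp_le f hf (fun B => by rw [hmap]; exact h 0 B) hB
    _ = ENNReal.ofReal ((24 / s ^ 2 * s + Real.exp (s ^ 2 / 24) * Real.exp (-(n / 12))) * M) *
          volume B := by
        rw [ENNReal.ofReal_mul (by positivity), ENNReal.ofReal_add (by positivity) (by positivity),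
          ENNReal.ofReal_mul (by positivity), ENNReal.ofReal_mul (by positivity)]
        ring
    _ ≤ _ := by
        gcongr
        rw [mul_div_right_comm]
        gcongr
        have h1 : 24 / s ^ 2 * s = 24 / s := by field_simp
        have h2 : Real.exp (s ^ 2 / 24) * Real.exp (-(n / 12)) ≤ 48 / s := by
          rw [← Real.exp_add, show s ^ 2 / 24 + -((n : ℝ) / 12) = -(s ^ 2 / 24 - 1 / 12) by
            rw [show (n : ℝ) = s ^ 2 - 1 by linarith]; ring, Real.exp_neg, ← one_div,
            div_le_div_iff₀ (Real.exp_pos _) hs0]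
          nlinarith [Real.add_one_le_exp (s ^ 2 / 24 - 1 / 12)]
        rw [h1, show 72 / s = 24 / s + 48 / s by ring]
        gcongr

/-- **Proposition.** There is a universal constant `c > 0` such that for independent real
random variables `X_1, …, X_d` with (a.e.) bounded densities `q_i`, the density `Q_d` of the
sum `Σ_{i=1}^d X_i` exists and satisfies `‖Q_d‖_∞ ≤ c · max_{i ≤ d} ‖q_i‖_∞ / √d`. -/
theorem stmt17 :
    ∃ c > (0:ℝ), ∀ (d : ℕ), 0 < d → ∀ (q : Fin d → ℝ → ℝ) (M : Fin d → ℝ),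
      (∀ i, Measurable (q i)) →
      (∀ i, IsProbabilityMeasure (volume.withDensity fun x => ENNReal.ofReal (q i x))) →
      (∀ i, ∀ᵐ x ∂(volume : Measure ℝ), |q i x| ≤ M i) →
      ∃ Q : ℝ → ℝ, Measurable Q ∧
        Measure.map (fun x : Fin d → ℝ => ∑ i, x i)
            (Measure.pi fun i => volume.withDensity fun x => ENNReal.ofReal (q i x)) =
          volume.withDensity (fun t => ENNReal.ofReal (Q t)) ∧
        ∀ᵐ t ∂(volume : Measure ℝ), |Q t| ≤ c * (⨆ i, M i) / Real.sqrt d := by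
  refine ⟨72, by norm_num, fun d hd q M hq hprob hM => ?_⟩
  obtain ⟨n, rfl⟩ : ∃ n, d = n + 1 := ⟨d - 1, by omega⟩
  set m := ⨆ i, M i with hm
  have hMm : ∀ i, M i ≤ m := le_ciSup (Finite.bddAbove_range M)
  have hm0 : 0 ≤ m := by
    obtain ⟨x, hx⟩ := (hM 0).exists
    exact (abs_nonneg _).trans (hx.trans (hMm 0))
  have hbound : ∀ i B, (volume.withDensity fun x => ENNReal.ofReal (q i x)) B ≤
      ENNReal.ofReal m * volume B := by
    intro i B
    rw [withDensity_apply' _ B, ← setLIntegral_const]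
    refine lintegral_mono_ae (ae_restrict_of_ae ?_)
    filter_upwards [hM i] with x hx
    exact ENNReal.ofReal_le_ofReal ((le_abs_self _).trans (hx.trans (hMm i)))
  set ν := Measure.map (fun x : Fin (n + 1) → ℝ => ∑ i, x i)
    (Measure.pi fun i => volume.withDensity fun x => ENNReal.ofReal (q i x)) with hν
  set K := 72 * m / Real.sqrt (n + 1 : ℕ) with hK
  have hK0 : 0 ≤ K := by positivity
  have hνK : ∀ B, MeasurableSet B → ν B ≤ ENNReal.ofReal K * volume B :=
    fun B hB => map_sum_pi_le _ hm0 hbound hB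
  have : IsProbabilityMeasure ν := Measure.isProbabilityMeasure_map (by fun_prop)
  have hac : ν ≪ volume := Measure.AbsolutelyContinuous.mk fun B hB h0 => by
    simpa [h0] using hνK B hB
  have hle : ν.rnDeriv volume ≤ᵐ[volume] fun _ => ENNReal.ofReal K := by
    refine ae_le_of_forall_setLIntegral_le_of_sigmaFinite (Measure.measurable_rnDeriv _ _)
      fun B hB _ => ?_
    rw [Measure.setLIntegral_rnDeriv hac, setLIntegral_const]
    exact hνK B hB
  refine ⟨fun t => (ν.rnDeriv volume t).toReal, (Measure.measurable_rnDeriv _ _).ennreal_toReal,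
    ?_, ?_⟩
  · conv_lhs => rw [← Measure.withDensity_rnDeriv_eq ν volume hac]
    refine withDensity_congr_ae ?_
    filter_upwards [hle] with t ht
    exact (ENNReal.ofReal_toReal (ht.trans_lt ENNReal.ofReal_lt_top).ne).symm
  · filter_upwards [hle] with t ht
    rw [abs_of_nonneg ENNReal.toReal_nonneg]
    exact ENNReal.toReal_le_of_le_ofReal hK0 ht
end
end
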